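/- arXiv:2602.12671 — 9 statements merged into one kernel-verified Lean document; each statement's English description precedes it below -/
import Mathlib

section
/- Let (C, Δ₋₁, Δ₀, Δ₁, α) be a Hom-tridendriform coalgebra over a field of characteristic 0 and let β : C → C be an endomorphism of it, i.e. a linear map satisfying β∘α = α∘β and Δᵢ∘β = (β⊗β)∘Δᵢ for i = −1, 0, 1. Then (C, Δ₋₁∘β, Δ₀∘β, Δ₁∘β, β∘α) is again a Hom-tridendriform coalgebra. -/
open TensorProduct

noncomputable section

variable {F : Type*} [Field F] [CharZero F]
variable {C : Type*} [AddCommGroup C] [Module F C]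

/-- The flip `τ : x ⊗ y ↦ y ⊗ x` on `C ⊗ C`. -/
def tw : C ⊗[F] C →ₗ[F] C ⊗[F] C := (TensorProduct.comm F C C).toLinearMap

/-- `(f ⊗ g)` (followed by the associator), for `f : C → C ⊗ C`, `g : C → C`. -/
def rT (f : C →ₗ[F] C ⊗[F] C) (g : C →ₗ[F] C) :
    C ⊗[F] C →ₗ[F] C ⊗[F] (C ⊗[F] C) :=
  (TensorProduct.assoc F C C C).toLinearMap ∘ₗ TensorProduct.map f g

/-- `(g ⊗ f)` for `g : C → C`, `f : C → C ⊗ C`. -/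
def lT (g : C →ₗ[F] C) (f : C →ₗ[F] C ⊗[F] C) :
    C ⊗[F] C →ₗ[F] C ⊗[F] (C ⊗[F] C) :=
  TensorProduct.map g f

/-- `τ ⊗ I` acting on `C ⊗ (C ⊗ C)` (swap of the first two factors). -/
def sw12 : C ⊗[F] (C ⊗[F] C) →ₗ[F] C ⊗[F] (C ⊗[F] C) :=
  (TensorProduct.assoc F C C C).toLinearMap ∘ₗ
    TensorProduct.map (tw : C ⊗[F] C →ₗ[F] C ⊗[F] C) (LinearMap.id : C →ₗ[F] C) ∘ₗ
    (TensorProduct.assoc F C C C).symm.toLinearMap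

/-- The cyclic permutation `ξ : x ⊗ y ⊗ z ↦ y ⊗ z ⊗ x` on `C ⊗ (C ⊗ C)`. -/
def cyc : C ⊗[F] (C ⊗[F] C) →ₗ[F] C ⊗[F] (C ⊗[F] C) :=
  TensorProduct.map (LinearMap.id : C →ₗ[F] C) (tw : C ⊗[F] C →ₗ[F] C ⊗[F] C) ∘ₗ sw12

/-- Hom-tridendriform coalgebra axioms for `(C, Δ₋₁, Δ₀, Δ₁, α)`. -/
def IsHomTridendriformCoalgebra (Δm Δ0 Δp : C →ₗ[F] C ⊗[F] C) (α : C →ₗ[F] C) : Prop :=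
  (rT Δm α ∘ₗ Δm = lT α (Δm + Δ0 + Δp) ∘ₗ Δm) ∧
  (rT Δp α ∘ₗ Δm = lT α Δm ∘ₗ Δp) ∧
  (lT α Δp ∘ₗ Δp = rT (Δm + Δ0 + Δp) α ∘ₗ Δp) ∧
  (rT Δm α ∘ₗ Δ0 = lT α Δp ∘ₗ Δ0) ∧
  (rT Δp α ∘ₗ Δ0 = lT α Δ0 ∘ₗ Δp) ∧
  (rT Δ0 α ∘ₗ Δm = lT α Δm ∘ₗ Δ0) ∧
  (rT Δ0 α ∘ₗ Δ0 = lT α Δ0 ∘ₗ Δ0)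

section Twist

variable {R M N P : Type*} [CommSemiring R] [AddCommMonoid M] [Module R M]
  [AddCommMonoid N] [Module R N] [AddCommMonoid P] [Module R P]

theorem map_comp_comul_twist {Δ : M →ₗ[R] M ⊗[R] M} {β : M →ₗ[R] M}
    (hΔ : Δ ∘ₗ β = map β β ∘ₗ Δ) (f : M →ₗ[R] N) (g : M →ₗ[R] P) :
    map (f ∘ₗ β) (g ∘ₗ β) ∘ₗ (Δ ∘ₗ β) = (map f g ∘ₗ Δ) ∘ₗ (β ∘ₗ β) :=
  calc map (f ∘ₗ β) (g ∘ₗ β) ∘ₗ (Δ ∘ₗ β)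
      = map f g ∘ₗ (map β β ∘ₗ Δ) ∘ₗ β := by simp only [map_comp, LinearMap.comp_assoc]
    _ = (map f g ∘ₗ Δ) ∘ₗ (β ∘ₗ β) := by rw [← hΔ]; simp only [LinearMap.comp_assoc]

/-- The Hom-coassociativity relation `(δ ⊗ α) ∘ Δ = (α ⊗ δ') ∘ Δ'`, with the left-hand side
transported along the associator. Every Hom-tridendriform coalgebra axiom is of this form. -/
def HomCoassoc (α : M →ₗ[R] M) (δ Δ δ' Δ' : M →ₗ[R] M ⊗[R] M) : Prop :=
  (TensorProduct.assoc R M M M).toLinearMap ∘ₗ map δ α ∘ₗ Δ = map α δ' ∘ₗ Δ'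

/-- Twisting by `β` precomposes both sides of the relation with `β ∘ β`. -/
theorem HomCoassoc.twist {α β : M →ₗ[R] M} {δ Δ δ' Δ' : M →ₗ[R] M ⊗[R] M}
    (h : HomCoassoc α δ Δ δ' Δ') (hβα : β ∘ₗ α = α ∘ₗ β)
    (hΔ : Δ ∘ₗ β = map β β ∘ₗ Δ) (hΔ' : Δ' ∘ₗ β = map β β ∘ₗ Δ') :
    HomCoassoc (β ∘ₗ α) (δ ∘ₗ β) (Δ ∘ₗ β) (δ' ∘ₗ β) (Δ' ∘ₗ β) := by
  rw [HomCoassoc] at h ⊢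
  rw [hβα, map_comp_comul_twist hΔ, map_comp_comul_twist hΔ', ← LinearMap.comp_assoc, h]

/-- Hom-tridendriform coalgebras over an arbitrary commutative semiring. A field `i_j` is the axiom
whose left-hand side is `(Δᵢ ⊗ α) ∘ Δⱼ`, where `left`, `mid`, `right` stand for the indices
`-1`, `0`, `1`, and `total` for the sum of the three comultiplications. -/
structure HomTridendriformCoaxioms (Δm Δ0 Δp : M →ₗ[R] M ⊗[R] M) (α : M →ₗ[R] M) : Prop where
  left_left : HomCoassoc α Δm Δm (Δm + Δ0 + Δp) Δm
  right_left : HomCoassoc α Δp Δm Δm Δp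
  total_right : HomCoassoc α (Δm + Δ0 + Δp) Δp Δp Δp
  left_mid : HomCoassoc α Δm Δ0 Δp Δ0
  right_mid : HomCoassoc α Δp Δ0 Δ0 Δp
  mid_left : HomCoassoc α Δ0 Δm Δm Δ0
  mid_mid : HomCoassoc α Δ0 Δ0 Δ0 Δ0

theorem homTridendriformCoalgebra_twist_general {Δm Δ0 Δp : M →ₗ[R] M ⊗[R] M} {α β : M →ₗ[R] M}
    (h : HomTridendriformCoaxioms Δm Δ0 Δp α) (hβα : β ∘ₗ α = α ∘ₗ β)
    (hβm : Δm ∘ₗ β = map β β ∘ₗ Δm) (hβ0 : Δ0 ∘ₗ β = map β β ∘ₗ Δ0)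
    (hβp : Δp ∘ₗ β = map β β ∘ₗ Δp) :
    HomTridendriformCoaxioms (Δm ∘ₗ β) (Δ0 ∘ₗ β) (Δp ∘ₗ β) (β ∘ₗ α) where
  left_left := by simpa only [LinearMap.add_comp] using h.left_left.twist hβα hβm hβm
  right_left := h.right_left.twist hβα hβm hβp
  total_right := by simpa only [LinearMap.add_comp] using h.total_right.twist hβα hβp hβp
  left_mid := h.left_mid.twist hβα hβ0 hβ0
  right_mid := h.right_mid.twist hβα hβ0 hβp
  mid_left := h.mid_left.twist hβα hβm hβ0
  mid_mid := h.mid_mid.twist hβα hβ0 hβ0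

end Twist

theorem isHomTridendriformCoalgebra_iff {K V : Type*} [Field K] [AddCommGroup V] [Module K V]
    {Δm Δ0 Δp : V →ₗ[K] V ⊗[K] V} {α : V →ₗ[K] V} :
    IsHomTridendriformCoalgebra Δm Δ0 Δp α ↔ HomTridendriformCoaxioms Δm Δ0 Δp α :=
  ⟨fun ⟨hmm, hpm, hpp, hm0, hp0, h0m, h00⟩ => ⟨hmm, hpm, hpp.symm, hm0, hp0, h0m, h00⟩,
    fun h => ⟨h.left_left, h.right_left, h.total_right.symm, h.left_mid, h.right_mid, h.mid_left,
      h.mid_mid⟩⟩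

/-- Twisting a Hom-tridendriform coalgebra by one of its endomorphisms. -/
theorem homTridendriformCoalgebra_twist
    (Δm Δ0 Δp : C →ₗ[F] C ⊗[F] C) (α β : C →ₗ[F] C)
    (h : IsHomTridendriformCoalgebra Δm Δ0 Δp α)
    (hβα : β ∘ₗ α = α ∘ₗ β)
    (hβm : Δm ∘ₗ β = TensorProduct.map β β ∘ₗ Δm)
    (hβ0 : Δ0 ∘ₗ β = TensorProduct.map β β ∘ₗ Δ0)
    (hβp : Δp ∘ₗ β = TensorProduct.map β β ∘ₗ Δp) :
    IsHomTridendriformCoalgebra (Δm ∘ₗ β) (Δ0 ∘ₗ β) (Δp ∘ₗ β) (β ∘ₗ α) := by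
  exact isHomTridendriformCoalgebra_iff.mpr <|
    homTridendriformCoalgebra_twist_general (isHomTridendriformCoalgebra_iff.mp h) hβα hβm hβ0 hβp
end
end

section
/- Let (C, Δ₋₁, Δ₀, Δ₁, α) be a multiplicative Hom-tridendriform coalgebra over a field of characteristic 0 such that α is invertible. Then (C, Δ₋₁∘α⁻¹, Δ₀∘α⁻¹, Δ₁∘α⁻¹, id_C) is a tridendriform coalgebra, i.e. a Hom-tridendriform coalgebra whose structure map is the identity. -/
open TensorProduct

noncomputable section

variable {F : Type*} [Field F] [CharZero F]
variable {C : Type*} [AddCommGroup C] [Module F C]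

/-!
A Hom-tridendriform coalgebra can be twisted by any `β` commuting with the three coproducts:
since `Δᵢ ∘ β = (β ⊗ β) ∘ Δᵢ`, both sides of each axiom for `(Δᵢ ∘ β, α ∘ β)` are the corresponding
sides for `(Δᵢ, α)` precomposed with `β ∘ β`. Multiplicativity passes from `α` to `α⁻¹`, and the
twist by `β = α⁻¹` has structure map `α ∘ α⁻¹ = id`.
-/

section CompInverse

variable {R M : Type*} [CommSemiring R] [AddCommMonoid M] [Module R M]

theorem comp_eq_map_comp_of_inverse {Δ : M →ₗ[R] M ⊗[R] M} {β β' : M →ₗ[R] M}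
    (hΔ : Δ ∘ₗ β = TensorProduct.map β β ∘ₗ Δ)
    (hββ' : β ∘ₗ β' = LinearMap.id) (hβ'β : β' ∘ₗ β = LinearMap.id) :
    Δ ∘ₗ β' = TensorProduct.map β' β' ∘ₗ Δ := by
  have map_inverse : TensorProduct.map β' β' ∘ₗ TensorProduct.map β β = LinearMap.id := by
    rw [← TensorProduct.map_comp, hβ'β, TensorProduct.map_id]
  have semiconj : Function.Semiconj Δ β (TensorProduct.map β β) := LinearMap.congr_fun hΔ
  exact LinearMap.ext
    (semiconj.inverses_right (LinearMap.congr_fun hββ') (LinearMap.congr_fun map_inverse))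

end CompInverse

section Twist

variable {K : Type*} [Field K] {V : Type*} [AddCommGroup V] [Module K V]

theorem rT_comp_map (f : V →ₗ[K] V ⊗[K] V) (g β γ : V →ₗ[K] V) :
    rT f g ∘ₗ TensorProduct.map β γ = rT (f ∘ₗ β) (g ∘ₗ γ) := by
  rw [rT, rT, LinearMap.comp_assoc, TensorProduct.map_comp]

theorem lT_comp_map (g : V →ₗ[K] V) (f : V →ₗ[K] V ⊗[K] V) (β γ : V →ₗ[K] V) :
    lT g f ∘ₗ TensorProduct.map β γ = lT (g ∘ₗ β) (f ∘ₗ γ) :=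
  (TensorProduct.map_comp g f β γ).symm

variable {f f' g g' : V →ₗ[K] V ⊗[K] V} {α β : V →ₗ[K] V}

theorem rT_comp_twist (hg : g ∘ₗ β = TensorProduct.map β β ∘ₗ g) :
    rT (f ∘ₗ β) (α ∘ₗ β) ∘ₗ (g ∘ₗ β) = (rT f α ∘ₗ g) ∘ₗ (β ∘ₗ β) := by
  calc rT (f ∘ₗ β) (α ∘ₗ β) ∘ₗ (g ∘ₗ β)
      = rT f α ∘ₗ (TensorProduct.map β β ∘ₗ g) ∘ₗ β := by
        rw [← rT_comp_map, LinearMap.comp_assoc, LinearMap.comp_assoc]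
    _ = (rT f α ∘ₗ g) ∘ₗ (β ∘ₗ β) := by
        rw [← hg, LinearMap.comp_assoc, LinearMap.comp_assoc]

theorem lT_comp_twist (hg : g ∘ₗ β = TensorProduct.map β β ∘ₗ g) :
    lT (α ∘ₗ β) (f ∘ₗ β) ∘ₗ (g ∘ₗ β) = (lT α f ∘ₗ g) ∘ₗ (β ∘ₗ β) := by
  calc lT (α ∘ₗ β) (f ∘ₗ β) ∘ₗ (g ∘ₗ β)
      = lT α f ∘ₗ (TensorProduct.map β β ∘ₗ g) ∘ₗ β := by
        rw [← lT_comp_map, LinearMap.comp_assoc, LinearMap.comp_assoc]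
    _ = (lT α f ∘ₗ g) ∘ₗ (β ∘ₗ β) := by
        rw [← hg, LinearMap.comp_assoc, LinearMap.comp_assoc]

theorem rT_comp_eq_lT_comp_twist (hg : g ∘ₗ β = TensorProduct.map β β ∘ₗ g)
    (hg' : g' ∘ₗ β = TensorProduct.map β β ∘ₗ g') (h : rT f α ∘ₗ g = lT α f' ∘ₗ g') :
    rT (f ∘ₗ β) (α ∘ₗ β) ∘ₗ (g ∘ₗ β) = lT (α ∘ₗ β) (f' ∘ₗ β) ∘ₗ (g' ∘ₗ β) := by
  rw [rT_comp_twist hg, lT_comp_twist hg', h]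

theorem IsHomTridendriformCoalgebra.twist {Δm Δ0 Δp : V →ₗ[K] V ⊗[K] V}
    (h : IsHomTridendriformCoalgebra Δm Δ0 Δp α)
    (hm : Δm ∘ₗ β = TensorProduct.map β β ∘ₗ Δm)
    (h0 : Δ0 ∘ₗ β = TensorProduct.map β β ∘ₗ Δ0)
    (hp : Δp ∘ₗ β = TensorProduct.map β β ∘ₗ Δp) :
    IsHomTridendriformCoalgebra (Δm ∘ₗ β) (Δ0 ∘ₗ β) (Δp ∘ₗ β) (α ∘ₗ β) := by
  obtain ⟨left_left, right_left, right_right, left_mid, right_mid, mid_left, mid_mid⟩ := h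
  simp only [IsHomTridendriformCoalgebra, ← LinearMap.add_comp]
  exact ⟨rT_comp_eq_lT_comp_twist hm hm left_left,
    rT_comp_eq_lT_comp_twist hm hp right_left,
    (rT_comp_eq_lT_comp_twist hp hp right_right.symm).symm,
    rT_comp_eq_lT_comp_twist h0 h0 left_mid,
    rT_comp_eq_lT_comp_twist h0 hp right_mid,
    rT_comp_eq_lT_comp_twist hm h0 mid_left,
    rT_comp_eq_lT_comp_twist h0 h0 mid_mid⟩

theorem homTridendriformCoalgebra_untwist_general
    {Δm Δ0 Δp : V →ₗ[K] V ⊗[K] V}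
    (h : IsHomTridendriformCoalgebra Δm Δ0 Δp α)
    (hmultm : Δm ∘ₗ α = TensorProduct.map α α ∘ₗ Δm)
    (hmult0 : Δ0 ∘ₗ α = TensorProduct.map α α ∘ₗ Δ0)
    (hmultp : Δp ∘ₗ α = TensorProduct.map α α ∘ₗ Δp)
    {α' : V →ₗ[K] V} (hαα' : α ∘ₗ α' = LinearMap.id) (hα'α : α' ∘ₗ α = LinearMap.id) :
    IsHomTridendriformCoalgebra (Δm ∘ₗ α') (Δ0 ∘ₗ α') (Δp ∘ₗ α')
      (LinearMap.id : V →ₗ[K] V) := by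
  rw [← hαα']
  exact h.twist (comp_eq_map_comp_of_inverse hmultm hαα' hα'α)
    (comp_eq_map_comp_of_inverse hmult0 hαα' hα'α)
    (comp_eq_map_comp_of_inverse hmultp hαα' hα'α)

end Twist

/-- Untwisting a multiplicative Hom-tridendriform coalgebra with invertible structure
map yields a tridendriform coalgebra (structure map the identity). -/
theorem homTridendriformCoalgebra_untwist
    (Δm Δ0 Δp : C →ₗ[F] C ⊗[F] C) (α : C →ₗ[F] C)
    (h : IsHomTridendriformCoalgebra Δm Δ0 Δp α)
    (hmultm : Δm ∘ₗ α = TensorProduct.map α α ∘ₗ Δm)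
    (hmult0 : Δ0 ∘ₗ α = TensorProduct.map α α ∘ₗ Δ0)
    (hmultp : Δp ∘ₗ α = TensorProduct.map α α ∘ₗ Δp)
    (α' : C →ₗ[F] C) (hαα' : α ∘ₗ α' = LinearMap.id) (hα'α : α' ∘ₗ α = LinearMap.id) :
    IsHomTridendriformCoalgebra (Δm ∘ₗ α') (Δ0 ∘ₗ α') (Δp ∘ₗ α')
      (LinearMap.id : C →ₗ[F] C) :=
  homTridendriformCoalgebra_untwist_general h hmultm hmult0 hmultp hαα' hα'α
end
end

section
/- Let (C, Δ₋₁, Δ₀, Δ₁, α) be a Hom-tridendriform coalgebra over a field of characteristic 0 and define the comultiplication Δ : C → C⊗C by Δ = Δ₋₁ + Δ₀ + Δ₁. Then (C, Δ, α) isit a Hom-coassociative coalgebra, i.e. (α⊗Δ)∘Δ = (Δ⊗α)∘Δ. -/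
open TensorProduct

noncomputable section

variable {F : Type*} [Field F] [CharZero F]
variable {C : Type*} [AddCommGroup C] [Module F C]

/-- Hom-coassociative coalgebra axiom `(α ⊗ Δ) ∘ Δ = (Δ ⊗ α) ∘ Δ`. -/
def IsHomCoassociativeCoalgebra (Δ : C →ₗ[F] C ⊗[F] C) (α : C →ₗ[F] C) : Prop :=
  lT α Δ ∘ₗ Δ = rT Δ α ∘ₗ Δ

section

variable {K V : Type*} [Field K] [AddCommGroup V] [Module K V]

theorem lT_add_right (α : V →ₗ[K] V) (f g : V →ₗ[K] V ⊗[K] V) : lT α (f + g) = lT α f + lT α g :=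
  TensorProduct.map_add_right α f g

theorem rT_add_left (f g : V →ₗ[K] V ⊗[K] V) (α : V →ₗ[K] V) : rT (f + g) α = rT f α + rT g α := by
  simp only [rT, TensorProduct.map_add_left, LinearMap.comp_add]

/- Each cooperation `Δᵢ` contributes `rT Δ α ∘ₗ Δᵢ`. The axioms turn these contributions into
terms `lT α Δⱼ ∘ₗ Δₖ`, in which every pair `(j, k)` occurs exactly once. -/
theorem homTridendriformCoalgebra_sum_homCoassociative_general
    (Δm Δ0 Δp : V →ₗ[K] V ⊗[K] V) (α : V →ₗ[K] V)
    (h : IsHomTridendriformCoalgebra Δm Δ0 Δp α) :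
    IsHomCoassociativeCoalgebra (Δm + Δ0 + Δp) α := by
  obtain ⟨h_mm, h_pm, h_pp, h_m0, h_p0, h_0m, h_00⟩ := h
  have rT_comp_m : rT (Δm + Δ0 + Δp) α ∘ₗ Δm =
      lT α (Δm + Δ0 + Δp) ∘ₗ Δm + lT α Δm ∘ₗ Δ0 + lT α Δm ∘ₗ Δp := by
    rw [rT_add_left, rT_add_left, LinearMap.add_comp, LinearMap.add_comp, h_mm, h_0m, h_pm]
  have rT_comp_0 : rT (Δm + Δ0 + Δp) α ∘ₗ Δ0 =
      lT α Δp ∘ₗ Δ0 + lT α Δ0 ∘ₗ Δ0 + lT α Δ0 ∘ₗ Δp := by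
    rw [rT_add_left, rT_add_left, LinearMap.add_comp, LinearMap.add_comp, h_m0, h_00, h_p0]
  have rT_comp_p : rT (Δm + Δ0 + Δp) α ∘ₗ Δp = lT α Δp ∘ₗ Δp := h_pp.symm
  calc lT α (Δm + Δ0 + Δp) ∘ₗ (Δm + Δ0 + Δp)
    _ = (lT α (Δm + Δ0 + Δp) ∘ₗ Δm + lT α Δm ∘ₗ Δ0 + lT α Δm ∘ₗ Δp) +
        (lT α Δp ∘ₗ Δ0 + lT α Δ0 ∘ₗ Δ0 + lT α Δ0 ∘ₗ Δp) + lT α Δp ∘ₗ Δp := by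
      simp only [lT_add_right, LinearMap.comp_add, LinearMap.add_comp]
      abel
    _ = rT (Δm + Δ0 + Δp) α ∘ₗ (Δm + Δ0 + Δp) := by
      rw [LinearMap.comp_add, LinearMap.comp_add, rT_comp_m, rT_comp_0, rT_comp_p]

end

/-- The sum of the three cooperations of a Hom-tridendriform coalgebra is
Hom-coassociative. -/
theorem homTridendriformCoalgebra_sum_homCoassociative
    (Δm Δ0 Δp : C →ₗ[F] C ⊗[F] C) (α : C →ₗ[F] C)
    (h : IsHomTridendriformCoalgebra Δm Δ0 Δp α) :
    IsHomCoassociativeCoalgebra (Δm + Δ0 + Δp) α :=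
  homTridendriformCoalgebra_sum_homCoassociative_general Δm Δ0 Δp α h
end
end

section
/- Let (C, Δ₀, α, R) be a Hom-coassociative Rota-Baxter coalgebra of weight λ over a field of characteristic 0. Define Δ̄₋₁ = (I⊗R)∘Δ₀ + λΔ₀ and Δ̄₁ = (R⊗I)∘Δ₀. Then (C, Δ̄₋₁, Δ̄₁, α) is a Hom-dendriform coalgebra. -/
open TensorProduct

noncomputable section

variable {F : Type*} [Field F] [CharZero F]
variable {C : Type*} [AddCommGroup C] [Module F C]

/-- Rota-Baxter axioms of weight `lam` on a Hom-coassociative coalgebra `(C, Δ0, α)`. -/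
def IsHomCoassociativeRotaBaxter (Δ0 : C →ₗ[F] C ⊗[F] C) (α R : C →ₗ[F] C) (lam : F) : Prop :=
  (lT α Δ0 ∘ₗ Δ0 = rT Δ0 α ∘ₗ Δ0) ∧
  (R ∘ₗ α = α ∘ₗ R) ∧
  (TensorProduct.map R R ∘ₗ Δ0 =
    (TensorProduct.map R (LinearMap.id : C →ₗ[F] C) ∘ₗ Δ0 +
     TensorProduct.map (LinearMap.id : C →ₗ[F] C) R ∘ₗ Δ0 + lam • Δ0) ∘ₗ R)

/-- Hom-dendriform coalgebra axioms for `(C, Δ₋₁, Δ₁, α)`. -/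
def IsHomDendriformCoalgebra (Δm Δp : C →ₗ[F] C ⊗[F] C) (α : C →ₗ[F] C) : Prop :=
  (rT Δm α ∘ₗ Δm = lT α (Δm + Δp) ∘ₗ Δm) ∧
  (rT Δp α ∘ₗ Δm = lT α Δm ∘ₗ Δp) ∧
  (lT α Δp ∘ₗ Δp = rT (Δm + Δp) α ∘ₗ Δp)

/-!
Put `S = R + λ I`, so that `Δ̄₋₁ = (I ⊗ S) ∘ Δ₀`, and let `D = Δ̄₋₁ + Δ̄₁`. The Rota-Baxter identity
says `(R ⊗ R) ∘ Δ₀ = D ∘ R`, and expanding `S ⊗ S` gives `(S ⊗ S) ∘ Δ₀ = D ∘ S` as well. As `R` and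
`S` commute with `α`, each dendriform axiom becomes `f ⊗ g ⊗ k` applied to the two sides of
Hom-coassociativity, with `(f, g, k)` being `(I, S, S)`, `(R, I, S)` and `(R, R, I)`.
-/

section Semiring

open LinearMap (id_comp comp_id add_comp comp_add smul_comp comp_smul)
open CoassocSimps.TensorProduct (map_comp_assoc map_map_comp_assoc_eq_assoc)

variable {K M : Type*} [CommSemiring K] [AddCommMonoid M] [Module K M]
variable {Δ : M →ₗ[K] M ⊗[K] M} {α R S : M →ₗ[K] M} {c : K}

/-- Hom-coassociativity of a comultiplication `Δ` twisted by `α`, over any commutative semiring. -/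
def IsHomCoassociative (Δ : M →ₗ[K] M ⊗[K] M) (α : M →ₗ[K] M) : Prop :=
  map α Δ ∘ₗ Δ = TensorProduct.assoc K M M M ∘ₗ map Δ α ∘ₗ Δ

/-- The Hom-dendriform coalgebra axioms over any commutative semiring; over a field they unfold to
`IsHomDendriformCoalgebra`. -/
structure IsHomDendriform (Δm Δp : M →ₗ[K] M ⊗[K] M) (α : M →ₗ[K] M) : Prop where
  minus_minus : TensorProduct.assoc K M M M ∘ₗ map Δm α ∘ₗ Δm = map α (Δm + Δp) ∘ₗ Δm
  plus_minus : TensorProduct.assoc K M M M ∘ₗ map Δp α ∘ₗ Δm = map α Δm ∘ₗ Δp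
  plus_plus : map α Δp ∘ₗ Δp = TensorProduct.assoc K M M M ∘ₗ map (Δm + Δp) α ∘ₗ Δp

/-- The dual of a Rota-Baxter system: a pair of operators `R`, `S`, both intertwining `Δ` with the
same comultiplication `(I ⊗ S) ∘ Δ + (R ⊗ I) ∘ Δ`. A Rota-Baxter operator of weight `c` is the case
`S = R + c I`. -/
structure IsRotaBaxterCosystem (Δ : M →ₗ[K] M ⊗[K] M) (R S : M →ₗ[K] M) : Prop where
  map_left : map R R ∘ₗ Δ = (map .id S ∘ₗ Δ + map R .id ∘ₗ Δ) ∘ₗ R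
  map_right : map S S ∘ₗ Δ = (map .id S ∘ₗ Δ + map R .id ∘ₗ Δ) ∘ₗ S

theorem IsHomCoassociative.assoc_comp_map_map {N P Q : Type*} [AddCommMonoid N] [AddCommMonoid P]
    [AddCommMonoid Q] [Module K N] [Module K P] [Module K Q] (hΔ : IsHomCoassociative Δ α)
    (f : M →ₗ[K] N) (g : M →ₗ[K] P) (k : M →ₗ[K] Q) :
    TensorProduct.assoc K N P Q ∘ₗ map (map f g ∘ₗ Δ) (k ∘ₗ α) ∘ₗ Δ =
      map (f ∘ₗ α) (map g k ∘ₗ Δ) ∘ₗ Δ :=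
  calc TensorProduct.assoc K N P Q ∘ₗ map (map f g ∘ₗ Δ) (k ∘ₗ α) ∘ₗ Δ
    _ = map f (map g k) ∘ₗ TensorProduct.assoc K M M M ∘ₗ map Δ α ∘ₗ Δ := by
      rw [map_map_comp_assoc_eq_assoc, map_comp_assoc]
    _ = map f (map g k) ∘ₗ map α Δ ∘ₗ Δ := by rw [hΔ]
    _ = map (f ∘ₗ α) (map g k ∘ₗ Δ) ∘ₗ Δ := map_comp_assoc ..

theorem IsRotaBaxterCosystem.isHomDendriform (hRS : IsRotaBaxterCosystem Δ R S)
    (hΔ : IsHomCoassociative Δ α) (hR : R ∘ₗ α = α ∘ₗ R) (hS : S ∘ₗ α = α ∘ₗ S) :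
    IsHomDendriform (map .id S ∘ₗ Δ) (map R .id ∘ₗ Δ) α where
  minus_minus :=
    calc TensorProduct.assoc K M M M ∘ₗ map (map .id S ∘ₗ Δ) α ∘ₗ map .id S ∘ₗ Δ
      _ = TensorProduct.assoc K M M M ∘ₗ map (map .id S ∘ₗ Δ) (S ∘ₗ α) ∘ₗ Δ := by
        rw [map_comp_assoc, comp_id, hS]
      _ = map (LinearMap.id ∘ₗ α) (map S S ∘ₗ Δ) ∘ₗ Δ := hΔ.assoc_comp_map_map ..
      _ = map α (map .id S ∘ₗ Δ + map R .id ∘ₗ Δ) ∘ₗ map .id S ∘ₗ Δ := by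
        rw [map_comp_assoc, hRS.map_right, id_comp, comp_id]
  plus_minus :=
    calc TensorProduct.assoc K M M M ∘ₗ map (map R .id ∘ₗ Δ) α ∘ₗ map .id S ∘ₗ Δ
      _ = TensorProduct.assoc K M M M ∘ₗ map (map R .id ∘ₗ Δ) (S ∘ₗ α) ∘ₗ Δ := by
        rw [map_comp_assoc, comp_id, hS]
      _ = map (R ∘ₗ α) (map .id S ∘ₗ Δ) ∘ₗ Δ := hΔ.assoc_comp_map_map ..
      _ = map α (map .id S ∘ₗ Δ) ∘ₗ map R .id ∘ₗ Δ := by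
        rw [map_comp_assoc, comp_id, hR]
  plus_plus :=
    calc map α (map R .id ∘ₗ Δ) ∘ₗ map R .id ∘ₗ Δ
      _ = map (R ∘ₗ α) (map R .id ∘ₗ Δ) ∘ₗ Δ := by
        rw [map_comp_assoc, comp_id, hR]
      _ = TensorProduct.assoc K M M M ∘ₗ map (map R R ∘ₗ Δ) (LinearMap.id ∘ₗ α) ∘ₗ Δ :=
        (hΔ.assoc_comp_map_map ..).symm
      _ = TensorProduct.assoc K M M M ∘ₗ
            map (map .id S ∘ₗ Δ + map R .id ∘ₗ Δ) α ∘ₗ map R .id ∘ₗ Δ := by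
        rw [map_comp_assoc, hRS.map_left, id_comp, comp_id]

theorem map_id_add_smul_id_comp (Δ : M →ₗ[K] M ⊗[K] M) (R : M →ₗ[K] M) (c : K) :
    map .id (R + c • LinearMap.id) ∘ₗ Δ = map .id R ∘ₗ Δ + c • Δ := by
  rw [map_add_right, map_smul_right, map_id, add_comp, smul_comp, id_comp]

theorem map_add_smul_id_self (R : M →ₗ[K] M) (c : K) :
    map (R + c • LinearMap.id) (R + c • LinearMap.id) =
      map R R + c • (map .id (R + c • LinearMap.id) + map R .id) := by
  simp only [map_add_left, map_add_right, map_smul_left, map_smul_right, smul_add]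
  abel

theorem isRotaBaxterCosystem_add_smul_id
    (hR : map R R ∘ₗ Δ = (map R .id ∘ₗ Δ + map .id R ∘ₗ Δ + c • Δ) ∘ₗ R) :
    IsRotaBaxterCosystem Δ R (R + c • LinearMap.id) := by
  set S := R + c • LinearMap.id with hS
  set D := map .id S ∘ₗ Δ + map R .id ∘ₗ Δ with hD
  have map_left : map R R ∘ₗ Δ = D ∘ₗ R := by
    rw [hR, hD, hS, map_id_add_smul_id_comp, add_comm _ (map R .id ∘ₗ Δ), add_assoc]
  have map_right : map S S ∘ₗ Δ = D ∘ₗ S :=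
    calc map S S ∘ₗ Δ
      _ = map R R ∘ₗ Δ + c • D := by
        rw [hS, map_add_smul_id_self, add_comp, smul_comp, add_comp]
      _ = D ∘ₗ R + c • D := by rw [map_left]
      _ = D ∘ₗ S := by rw [hS, comp_add, comp_smul, comp_id]
  exact ⟨map_left, map_right⟩

theorem rotaBaxter_homDendriformCoalgebra_general (hΔ : IsHomCoassociative Δ α)
    (hα : R ∘ₗ α = α ∘ₗ R)
    (hR : map R R ∘ₗ Δ = (map R .id ∘ₗ Δ + map .id R ∘ₗ Δ + c • Δ) ∘ₗ R) :
    IsHomDendriform (map .id R ∘ₗ Δ + c • Δ) (map R .id ∘ₗ Δ) α := by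
  have hS : (R + c • LinearMap.id) ∘ₗ α = α ∘ₗ (R + c • LinearMap.id) := by
    rw [add_comp, comp_add, smul_comp, comp_smul, hα, id_comp, comp_id]
  rw [← map_id_add_smul_id_comp]
  exact (isRotaBaxterCosystem_add_smul_id hR).isHomDendriform hΔ hα hS

end Semiring

/-- A Hom-coassociative Rota-Baxter coalgebra of weight `lam` gives rise to a
Hom-dendriform coalgebra. -/
theorem rotaBaxter_homDendriformCoalgebra
    (Δ0 : C →ₗ[F] C ⊗[F] C) (α R : C →ₗ[F] C) (lam : F)
    (h : IsHomCoassociativeRotaBaxter Δ0 α R lam) :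
    IsHomDendriformCoalgebra
      (TensorProduct.map (LinearMap.id : C →ₗ[F] C) R ∘ₗ Δ0 + lam • Δ0)
      (TensorProduct.map R (LinearMap.id : C →ₗ[F] C) ∘ₗ Δ0) α := by
  obtain ⟨h₁, h₂, h₃⟩ := rotaBaxter_homDendriformCoalgebra_general h.1 h.2.1 h.2.2
  exact ⟨h₁, h₂, h₃⟩
end
end

section
/- Let (C, Δ₋₁, Δ₁, α) be a Hom-dendriform coalgebra over a field of characteristic 0 and define the linear map Δ = Δ₁ − τ∘Δ₋₁ : C → C⊗C, where τ is the flip of C⊗C. Then (C, Δ, α) is a Hom-preLie coalgebra. -/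
open TensorProduct

noncomputable section

variable {F : Type*} [Field F] [CharZero F]
variable {C : Type*} [AddCommGroup C] [Module F C]

/-- Hom-preLie coalgebra axiom for `(C, Δ, α)`. -/
def IsHomPreLieCoalgebra (Δ : C →ₗ[F] C ⊗[F] C) (α : C →ₗ[F] C) : Prop :=
  rT Δ α ∘ₗ Δ - lT α Δ ∘ₗ Δ = sw12 ∘ₗ (rT Δ α ∘ₗ Δ - lT α Δ ∘ₗ Δ)

/-!
Let `σ` be the swap of the first two tensor factors of `M ⊗ (M ⊗ M)` and `ρ` the rotation of all
three. Flipping tensor factors before or after a comultiplication amounts to permuting the three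
resulting factors, so the coassociator of `Δ₁ - τ ∘ Δ₋₁` is a signed sum of permutations of the
iterated comultiplications occurring in the dendriform axioms. Modulo those axioms the sum collapses
to `X + σ X`, where `X = ρ⁻¹ (Δ₁ ⊗ α) Δ₋₁ - (Δ₋₁ ⊗ α) Δ₁ - ρ (α ⊗ Δ₁) Δ₋₁`, and this is
`σ`-invariant because `σ` is an involution.
-/

section TensorPermutations

variable {R : Type*} [CommSemiring R]
variable {M M' N P Q : Type*} [AddCommMonoid M] [AddCommMonoid M'] [AddCommMonoid N]
  [AddCommMonoid P] [AddCommMonoid Q] [Module R M] [Module R M'] [Module R N] [Module R P]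
  [Module R Q]

variable (R M N P) in
/-- The rotation `x ⊗ (y ⊗ z) ↦ y ⊗ (z ⊗ x)`. It describes the effect of flipping two tensor factors
before comultiplying one of them. -/
def tensorRotate : M ⊗[R] (N ⊗[R] P) ≃ₗ[R] N ⊗[R] (P ⊗[R] M) :=
  TensorProduct.comm R M (N ⊗[R] P) ≪≫ₗ TensorProduct.assoc R N P M

/-- The map `δ ⊗ g` with its values reassociated to the right, so that it can be compared with maps
of the form `g ⊗ δ`. -/
def assocMap (δ : M →ₗ[R] N ⊗[R] P) (g : M' →ₗ[R] Q) : M ⊗[R] M' →ₗ[R] N ⊗[R] (P ⊗[R] Q) :=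
  (TensorProduct.assoc R N P Q).toLinearMap ∘ₗ TensorProduct.map δ g

lemma tensorRotate_symm_tensorRotate_symm (t : M ⊗[R] (N ⊗[R] P)) :
    (tensorRotate R N P M).symm ((tensorRotate R P M N).symm t) = tensorRotate R M N P t := by
  suffices h : (tensorRotate R N P M).symm.toLinearMap ∘ₗ (tensorRotate R P M N).symm.toLinearMap =
      (tensorRotate R M N P).toLinearMap from LinearMap.congr_fun h t
  ext x y z
  simp [tensorRotate]

lemma leftComm_tensorRotate_symm (t : M ⊗[R] (N ⊗[R] P)) :
    TensorProduct.leftComm R P M N ((tensorRotate R P M N).symm t) =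
      (TensorProduct.comm R N P).toLinearMap.lTensor M t := by
  suffices h : (TensorProduct.leftComm R P M N).toLinearMap ∘ₗ
      (tensorRotate R P M N).symm.toLinearMap =
        (TensorProduct.comm R N P).toLinearMap.lTensor M from LinearMap.congr_fun h t
  ext x y z
  simp [tensorRotate]

lemma leftComm_leftComm (t : M ⊗[R] (N ⊗[R] P)) :
    TensorProduct.leftComm R N M P (TensorProduct.leftComm R M N P t) = t :=
  (TensorProduct.leftComm R M N P).symm_apply_apply t

lemma assocMap_add_apply (δ δ' : M →ₗ[R] N ⊗[R] P) (g : M' →ₗ[R] Q) (t : M ⊗[R] M') :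
    assocMap (δ + δ') g t = assocMap δ g t + assocMap δ' g t := by
  simp [assocMap, TensorProduct.map_add_left]

variable (δ : M →ₗ[R] N ⊗[R] P) (g : M' →ₗ[R] Q)

lemma assocMap_apply_comm (t : M' ⊗[R] M) :
    assocMap δ g (TensorProduct.comm R M' M t) = tensorRotate R Q N P (TensorProduct.map g δ t) :=
  congrArg (TensorProduct.assoc R N P Q) (TensorProduct.map_comm δ g t)

lemma map_apply_comm (t : M ⊗[R] M') :
    TensorProduct.map g δ (TensorProduct.comm R M M' t) =
      (tensorRotate R Q N P).symm (assocMap δ g t) := by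
  simp [assocMap, tensorRotate, TensorProduct.map_comm]

lemma assocMap_comm_comp_apply (t : M ⊗[R] M') :
    assocMap ((TensorProduct.comm R N P).toLinearMap ∘ₗ δ) g t =
      TensorProduct.leftComm R N P Q (assocMap δ g t) := by
  suffices h : assocMap ((TensorProduct.comm R N P).toLinearMap ∘ₗ δ) g =
      (TensorProduct.leftComm R N P Q).toLinearMap ∘ₗ assocMap δ g from LinearMap.congr_fun h t
  ext x y
  simp [assocMap, TensorProduct.leftComm]

lemma map_comm_comp_apply (t : M' ⊗[R] M) :
    TensorProduct.map g ((TensorProduct.comm R N P).toLinearMap ∘ₗ δ) t =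
      TensorProduct.leftComm R P Q N
        ((tensorRotate R P Q N).symm (TensorProduct.map g δ t)) := by
  rw [leftComm_tensorRotate_symm, ← LinearMap.lTensor_comp_map, LinearMap.comp_apply]

end TensorPermutations

section Subtraction

variable {R : Type*} [CommSemiring R]
variable {M M' N N' P Q : Type*} [AddCommMonoid M] [AddCommMonoid M'] [AddCommGroup N]
  [AddCommGroup N'] [AddCommMonoid P] [AddCommMonoid Q] [Module R M] [Module R M'] [Module R N]
  [Module R N'] [Module R P] [Module R Q]

lemma assocMap_sub_apply (δ δ' : M →ₗ[R] N ⊗[R] P) (g : M' →ₗ[R] Q) (t : M ⊗[R] M') :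
    assocMap (δ - δ') g t = assocMap δ g t - assocMap δ' g t := by
  rw [eq_sub_iff_add_eq, ← assocMap_add_apply, sub_add_cancel]

lemma map_sub_right_apply (g : M →ₗ[R] N) (f f' : M' →ₗ[R] N') (t : M ⊗[R] M') :
    TensorProduct.map g (f - f') t = TensorProduct.map g f t - TensorProduct.map g f' t := by
  rw [eq_sub_iff_add_eq, ← LinearMap.add_apply, ← TensorProduct.map_add_right, sub_add_cancel]

end Subtraction

section HomCoassociator

variable {R : Type*} [CommSemiring R] {M : Type*} [AddCommGroup M] [Module R M]

/-- The coassociator `(Δ ⊗ α) ∘ Δ - (α ⊗ Δ) ∘ Δ` of a comultiplication twisted by `α`, with values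
reassociated to the right. -/
def homCoassociator (Δ : M →ₗ[R] M ⊗[R] M) (α : M →ₗ[R] M) : M →ₗ[R] M ⊗[R] (M ⊗[R] M) :=
  assocMap Δ α ∘ₗ Δ - TensorProduct.map α Δ ∘ₗ Δ

variable (Δm Δp : M →ₗ[R] M ⊗[R] M) (α : M →ₗ[R] M)

local notation "σ" => TensorProduct.leftComm R M M M
local notation "ρ" => tensorRotate R M M M

lemma homCoassociator_sub_comm_comp_apply (x : M) :
    homCoassociator (Δp - (TensorProduct.comm R M M).toLinearMap ∘ₗ Δm) α x =
      assocMap Δp α (Δp x) - TensorProduct.map α Δp (Δp x) - σ (assocMap Δm α (Δp x))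
        - ρ (TensorProduct.map α Δp (Δm x)) + (ρ).symm (assocMap Δp α (Δm x))
        + σ ((ρ).symm (TensorProduct.map α Δm (Δp x)))
        + σ (ρ (TensorProduct.map α Δm (Δm x) - assocMap Δm α (Δm x))) := by
  -- Flips inside the maps are removed before flips of their arguments: the other order leaves
  -- products of `σ` and `ρ⁻¹` that do not match the right-hand side.
  simp only [homCoassociator, LinearMap.sub_apply, LinearMap.comp_apply, assocMap_sub_apply,
    map_sub_right_apply, assocMap_comm_comp_apply, map_comm_comp_apply]
  simp only [map_sub, LinearEquiv.coe_coe, assocMap_apply_comm, map_apply_comm,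
    tensorRotate_symm_tensorRotate_symm]
  abel

variable {Δm Δp α}

lemma homCoassociator_sub_comm_comp_apply_eq_add_leftComm
    (hmm : assocMap Δm α ∘ₗ Δm = TensorProduct.map α (Δm + Δp) ∘ₗ Δm)
    (hpm : assocMap Δp α ∘ₗ Δm = TensorProduct.map α Δm ∘ₗ Δp)
    (hpp : TensorProduct.map α Δp ∘ₗ Δp = assocMap (Δm + Δp) α ∘ₗ Δp) (x : M) :
    let X := (ρ).symm (assocMap Δp α (Δm x)) - assocMap Δm α (Δp x)
      - ρ (TensorProduct.map α Δp (Δm x))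
    homCoassociator (Δp - (TensorProduct.comm R M M).toLinearMap ∘ₗ Δm) α x = X + σ X := by
  have hmm_apply : assocMap Δm α (Δm x) =
      TensorProduct.map α Δm (Δm x) + TensorProduct.map α Δp (Δm x) := by
    simpa [TensorProduct.map_add_right] using LinearMap.congr_fun hmm x
  have hpm_apply : assocMap Δp α (Δm x) = TensorProduct.map α Δm (Δp x) :=
    LinearMap.congr_fun hpm x
  have hpp_apply : TensorProduct.map α Δp (Δp x) =
      assocMap Δm α (Δp x) + assocMap Δp α (Δp x) := by
    simpa [assocMap_add_apply] using LinearMap.congr_fun hpp x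
  rw [homCoassociator_sub_comm_comp_apply, hmm_apply, hpm_apply, hpp_apply]
  simp only [map_sub, map_add]
  abel

theorem homDendriform_homPreLieCoalgebra_general
    (hmm : assocMap Δm α ∘ₗ Δm = TensorProduct.map α (Δm + Δp) ∘ₗ Δm)
    (hpm : assocMap Δp α ∘ₗ Δm = TensorProduct.map α Δm ∘ₗ Δp)
    (hpp : TensorProduct.map α Δp ∘ₗ Δp = assocMap (Δm + Δp) α ∘ₗ Δp) :
    homCoassociator (Δp - (TensorProduct.comm R M M).toLinearMap ∘ₗ Δm) α =
      (TensorProduct.leftComm R M M M).toLinearMap ∘ₗ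
        homCoassociator (Δp - (TensorProduct.comm R M M).toLinearMap ∘ₗ Δm) α := by
  ext x
  rw [LinearMap.comp_apply, homCoassociator_sub_comm_comp_apply_eq_add_leftComm hmm hpm hpp x,
    LinearEquiv.coe_coe, map_add, leftComm_leftComm, add_comm]

end HomCoassociator

/-- A Hom-dendriform coalgebra gives a Hom-preLie coalgebra via `Δ = Δ₁ - τ ∘ Δ₋₁`. -/
theorem homDendriform_homPreLieCoalgebra
    (Δm Δp : C →ₗ[F] C ⊗[F] C) (α : C →ₗ[F] C)
    (h : IsHomDendriformCoalgebra Δm Δp α) :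
    IsHomPreLieCoalgebra (Δp - tw ∘ₗ Δm) α :=
  homDendriform_homPreLieCoalgebra_general h.1 h.2.1 h.2.2
end
end

section
/- Let (M, Δ₋₁ᴹ, Δ₀ᴹ, Δ₁ᴹ, α_M) be a Hom-tridendriform comodule over a multiplicative Hom-tridendriform coalgebra (C, Δ₋₁, Δ₀, Δ₁, α). For any natural number n define the linear maps Δᵢᴹ⁽ⁿ⁾ = (αⁿ⊗Id_M)∘Δᵢᴹ : M → C⊗M for i = −1, 0, 1. Then (M, Δ₋₁ᴹ⁽ⁿ⁾, Δ₀ᴹ⁽ⁿ⁾, Δ₁ᴹ⁽ⁿ⁾, α_M) is again a Hom-tridendriform comodule over (C, Δ₋₁, Δ₀, Δ₁, α). -/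
open TensorProduct

noncomputable section

variable {F : Type*} [Field F] [CharZero F]
variable {C : Type*} [AddCommGroup C] [Module F C]

variable {M : Type*} [AddCommGroup M] [Module F M]

/-- `(f ⊗ g)` (followed by the associator) for `f : C → C ⊗ C`, `g : M → M`. -/
def rTM (f : C →ₗ[F] C ⊗[F] C) (g : M →ₗ[F] M) :
    C ⊗[F] M →ₗ[F] C ⊗[F] (C ⊗[F] M) :=
  (TensorProduct.assoc F C C M).toLinearMap ∘ₗ TensorProduct.map f g

/-- `(g ⊗ f)` for `g : C → C`, `f : M → C ⊗ M`. -/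
def lTM (g : C →ₗ[F] C) (f : M →ₗ[F] C ⊗[F] M) :
    C ⊗[F] M →ₗ[F] C ⊗[F] (C ⊗[F] M) :=
  TensorProduct.map g f

/-- `τ ⊗ Id_M` acting on `C ⊗ (C ⊗ M)` (swap of the two `C`-factors). -/
def sw12M : C ⊗[F] (C ⊗[F] M) →ₗ[F] C ⊗[F] (C ⊗[F] M) :=
  (TensorProduct.assoc F C C M).toLinearMap ∘ₗ
    TensorProduct.map (tw : C ⊗[F] C →ₗ[F] C ⊗[F] C) (LinearMap.id : M →ₗ[F] M) ∘ₗ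
    (TensorProduct.assoc F C C M).symm.toLinearMap

/-- Hom-tridendriform comodule axioms over the Hom-tridendriform coalgebra
`(C, Δ₋₁, Δ₀, Δ₁, α)`. -/
def IsHomTridendriformComodule (Δm Δ0 Δp : C →ₗ[F] C ⊗[F] C) (α : C →ₗ[F] C)
    (Dm D0 Dp : M →ₗ[F] C ⊗[F] M) (αM : M →ₗ[F] M) : Prop :=
  (rTM Δm αM ∘ₗ Dm = lTM α (Dm + D0 + Dp) ∘ₗ Dm) ∧
  (rTM Δp αM ∘ₗ Dm = lTM α Dm ∘ₗ Dp) ∧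
  (lTM α Dp ∘ₗ Dp = rTM (Δm + Δ0 + Δp) αM ∘ₗ Dp) ∧
  (rTM Δm αM ∘ₗ D0 = lTM α Dp ∘ₗ D0) ∧
  (rTM Δp αM ∘ₗ D0 = lTM α D0 ∘ₗ Dp) ∧
  (rTM Δ0 αM ∘ₗ Dm = lTM α Dm ∘ₗ D0) ∧
  (rTM Δ0 αM ∘ₗ D0 = lTM α D0 ∘ₗ D0)

/-!
If `β` is an endomorphism of each comultiplication and commutes with `α`, then `β ⊗ Id` can be
pulled through both sides of every comodule axiom: twisting the coactions by `β ⊗ Id` composes both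
sides with the same map `β ⊗ (β ⊗ Id)`. The powers `β = αⁿ` qualify by multiplicativity.
-/

/-- `β` is an endomorphism of the comultiplication `Δ`, that is `Δ ∘ β = (β ⊗ β) ∘ Δ`. For the
structure map `β = α` this is the multiplicativity condition; it is stated for any `β` so that it
can be applied to the powers of `α`. -/
def IsComulEndomorphism {R V : Type*} [CommSemiring R] [AddCommMonoid V] [Module R V]
    (Δ : V →ₗ[R] V ⊗[R] V) (β : V →ₗ[R] V) : Prop :=
  Δ ∘ₗ β = TensorProduct.map β β ∘ₗ Δ

namespace IsComulEndomorphism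

variable {R V : Type*} [CommSemiring R] [AddCommMonoid V] [Module R V]
variable {Δ Δ' : V →ₗ[R] V ⊗[R] V} {β : V →ₗ[R] V}

theorem add (h : IsComulEndomorphism Δ β) (h' : IsComulEndomorphism Δ' β) :
    IsComulEndomorphism (Δ + Δ') β := by
  unfold IsComulEndomorphism at *
  rw [LinearMap.add_comp, LinearMap.comp_add, h, h']

theorem pow (h : IsComulEndomorphism Δ β) (n : ℕ) : IsComulEndomorphism Δ (β ^ n) := by
  unfold IsComulEndomorphism at *
  rw [← TensorProduct.map_pow]
  exact (Module.End.commute_pow_left_of_commute h.symm n).symm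

end IsComulEndomorphism

section Twist

variable {K V W : Type*} [Field K] [AddCommGroup V] [Module K V] [AddCommGroup W] [Module K W]

theorem rTM_comp_rTensor {Δ : V →ₗ[K] V ⊗[K] V} {β : V →ₗ[K] V}
    (hβ : IsComulEndomorphism Δ β) (αW : W →ₗ[K] W) :
    rTM Δ αW ∘ₗ β.rTensor W = TensorProduct.map β (β.rTensor W) ∘ₗ rTM Δ αW :=
  calc
    rTM Δ αW ∘ₗ β.rTensor W
        = (TensorProduct.assoc K V V W).toLinearMap ∘ₗ TensorProduct.map (Δ ∘ₗ β) αW := by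
      rw [rTM, LinearMap.comp_assoc, LinearMap.map_comp_rTensor]
    _ = (TensorProduct.assoc K V V W).toLinearMap ∘ₗ
          (TensorProduct.map β β).rTensor W ∘ₗ TensorProduct.map Δ αW := by
      rw [hβ, LinearMap.rTensor_comp_map]
    _ = TensorProduct.map β (β.rTensor W) ∘ₗ rTM Δ αW := by
      rw [rTM, ← LinearMap.comp_assoc, ← LinearMap.comp_assoc, LinearMap.rTensor,
        LinearMap.rTensor, TensorProduct.map_map_comp_assoc_eq]

theorem lTM_rTensor_comp_comp_rTensor {α β : V →ₗ[K] V} (hαβ : Commute α β)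
    (D : W →ₗ[K] V ⊗[K] W) :
    lTM α (β.rTensor W ∘ₗ D) ∘ₗ β.rTensor W =
      TensorProduct.map β (β.rTensor W) ∘ₗ lTM α D := by
  have hcomp : α ∘ₗ β = β ∘ₗ α := hαβ
  rw [lTM, lTM, LinearMap.map_comp_rTensor, hcomp, TensorProduct.map_comp]

theorem rTM_comp_eq_lTM_comp_twist {Δ : V →ₗ[K] V ⊗[K] V} {α β : V →ₗ[K] V}
    {αW : W →ₗ[K] W} {D D' E : W →ₗ[K] V ⊗[K] W}
    (hβ : IsComulEndomorphism Δ β) (hαβ : Commute α β)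
    (h : rTM Δ αW ∘ₗ D = lTM α E ∘ₗ D') :
    rTM Δ αW ∘ₗ (β.rTensor W ∘ₗ D) =
      lTM α (β.rTensor W ∘ₗ E) ∘ₗ (β.rTensor W ∘ₗ D') := by
  rw [← LinearMap.comp_assoc, ← LinearMap.comp_assoc, rTM_comp_rTensor hβ,
    lTM_rTensor_comp_comp_rTensor hαβ, LinearMap.comp_assoc, LinearMap.comp_assoc, h]

theorem homTridendriformComodule_twist_pow_general
    {Δm Δ0 Δp : V →ₗ[K] V ⊗[K] V} {α β : V →ₗ[K] V}
    {Dm D0 Dp : W →ₗ[K] V ⊗[K] W} {αW : W →ₗ[K] W}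
    (hm : IsComulEndomorphism Δm β) (h0 : IsComulEndomorphism Δ0 β)
    (hp : IsComulEndomorphism Δp β) (hαβ : Commute α β)
    (hM : IsHomTridendriformComodule Δm Δ0 Δp α Dm D0 Dp αW) :
    IsHomTridendriformComodule Δm Δ0 Δp α
      (β.rTensor W ∘ₗ Dm) (β.rTensor W ∘ₗ D0) (β.rTensor W ∘ₗ Dp) αW := by
  obtain ⟨hmm, hpm, hpp, hm0, hp0, h0m, h00⟩ := hM
  refine ⟨?_, rTM_comp_eq_lTM_comp_twist hp hαβ hpm, ?_,
    rTM_comp_eq_lTM_comp_twist hm hαβ hm0, rTM_comp_eq_lTM_comp_twist hp hαβ hp0,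
    rTM_comp_eq_lTM_comp_twist h0 hαβ h0m, rTM_comp_eq_lTM_comp_twist h0 hαβ h00⟩
  · rw [← LinearMap.comp_add, ← LinearMap.comp_add]
    exact rTM_comp_eq_lTM_comp_twist hm hαβ hmm
  · exact (rTM_comp_eq_lTM_comp_twist ((hm.add h0).add hp) hαβ hpp.symm).symm

end Twist

/-- Twisting the structure maps of a Hom-tridendriform comodule by `α^n ⊗ Id_M`
gives again a Hom-tridendriform comodule. -/
theorem homTridendriformComodule_twist_pow
    (Δm Δ0 Δp : C →ₗ[F] C ⊗[F] C) (α : C →ₗ[F] C)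
    (Dm D0 Dp : M →ₗ[F] C ⊗[F] M) (αM : M →ₗ[F] M)
    (hC : IsHomTridendriformCoalgebra Δm Δ0 Δp α)
    (hmultm : Δm ∘ₗ α = TensorProduct.map α α ∘ₗ Δm)
    (hmult0 : Δ0 ∘ₗ α = TensorProduct.map α α ∘ₗ Δ0)
    (hmultp : Δp ∘ₗ α = TensorProduct.map α α ∘ₗ Δp)
    (hM : IsHomTridendriformComodule Δm Δ0 Δp α Dm D0 Dp αM) (n : ℕ) :
    IsHomTridendriformComodule Δm Δ0 Δp α
      (TensorProduct.map (α ^ n) (LinearMap.id : M →ₗ[F] M) ∘ₗ Dm)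
      (TensorProduct.map (α ^ n) (LinearMap.id : M →ₗ[F] M) ∘ₗ D0)
      (TensorProduct.map (α ^ n) (LinearMap.id : M →ₗ[F] M) ∘ₗ Dp) αM :=
  homTridendriformComodule_twist_pow_general (.pow hmultm n) (.pow hmult0 n) (.pow hmultp n)
    (Commute.self_pow α n) hM
end
end

section
/- Let (L, γ, Δ, α) be a post-Hom-Lie coalgebra over a field of characteristic 0 and let β : L → L be an endomorphism of it, i.e. a linear map satisfying β∘α = α∘β, γ∘β = (β⊗β)∘γ and Δ∘β = (β⊗β)∘Δ. Then (L, γ∘β, Δ∘β, β∘α) is again a post-Hom-Lie coalgebra. -/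
open TensorProduct

noncomputable section

variable {F : Type*} [Field F] [CharZero F]
variable {C : Type*} [AddCommGroup C] [Module F C]

/-- Hom-Lie coalgebra axioms for `(C, γ, α)`: skew-cocommutativity,
comultiplicativity, and the Hom-co-Jacobi identity. -/
def IsHomLieCoalgebra (γ : C →ₗ[F] C ⊗[F] C) (α : C →ₗ[F] C) : Prop :=
  (γ = -(tw ∘ₗ γ)) ∧
  (γ ∘ₗ α = TensorProduct.map α α ∘ₗ γ) ∧
  ((LinearMap.id + cyc + cyc ∘ₗ cyc) ∘ₗ (lT α γ ∘ₗ γ) = 0)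

/-- Post-Hom-Lie coalgebra axioms for `(C, γ, Δ, α)`. -/
def IsPostHomLieCoalgebra (γ Δ : C →ₗ[F] C ⊗[F] C) (α : C →ₗ[F] C) : Prop :=
  IsHomLieCoalgebra γ α ∧
  (lT α γ ∘ₗ Δ - rT Δ α ∘ₗ γ - sw12 ∘ₗ (lT α Δ ∘ₗ γ) = 0) ∧
  (rT Δ α ∘ₗ Δ - lT α Δ ∘ₗ Δ - sw12 ∘ₗ (rT Δ α ∘ₗ Δ) +
    sw12 ∘ₗ (lT α Δ ∘ₗ Δ) + rT γ α ∘ₗ Δ = 0)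

/-!
Each of the three cubic axioms of a post-Hom-Lie coalgebra says that some linear map
`J : C → C ⊗ C ⊗ C` vanishes. Since `β` commutes with the cooperations,
`βα ⊗ γβ = (β ⊗ β ⊗ β)(α ⊗ γ)`, and likewise for `Δ` and for the factors in the other order, while
`β ⊗ β ⊗ β` commutes with permutations of the factors. Hence twisting by `β` replaces `J` by
`(β ⊗ β ⊗ β) J β`, which vanishes along with `J`.
-/

section Twist

variable {K : Type*} [Field K]
variable {V W : Type*} [AddCommGroup V] [Module K V] [AddCommGroup W] [Module K W]

theorem tw_comp_map (f g : V →ₗ[K] W) :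
    tw ∘ₗ TensorProduct.map f g = TensorProduct.map g f ∘ₗ tw :=
  (TensorProduct.map_comp_comm_eq g f).symm

theorem sw12_comp_map (f g h : V →ₗ[K] W) :
    sw12 ∘ₗ TensorProduct.map f (TensorProduct.map g h) =
      TensorProduct.map g (TensorProduct.map f h) ∘ₗ sw12 := by
  ext
  simp [sw12, tw]

theorem cyc_comp_map (f g h : V →ₗ[K] W) :
    cyc ∘ₗ TensorProduct.map f (TensorProduct.map g h) =
      TensorProduct.map g (TensorProduct.map h f) ∘ₗ cyc := by
  rw [cyc, LinearMap.comp_assoc, sw12_comp_map, ← LinearMap.comp_assoc, ← TensorProduct.map_comp,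
    tw_comp_map, LinearMap.id_comp, cyc, ← LinearMap.comp_assoc, ← TensorProduct.map_comp,
    LinearMap.comp_id]

theorem lT_map_comp (f g h α : V →ₗ[K] V) (δ : V →ₗ[K] V ⊗[K] V) :
    lT (f ∘ₗ α) (TensorProduct.map g h ∘ₗ δ) =
      TensorProduct.map f (TensorProduct.map g h) ∘ₗ lT α δ :=
  TensorProduct.map_comp ..

theorem rT_map_comp (f g h α : V →ₗ[K] V) (δ : V →ₗ[K] V ⊗[K] V) :
    rT (TensorProduct.map f g ∘ₗ δ) (h ∘ₗ α) =
      TensorProduct.map f (TensorProduct.map g h) ∘ₗ rT δ α := by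
  rw [rT, TensorProduct.map_comp, ← LinearMap.comp_assoc,
    ← TensorProduct.map_map_comp_assoc_eq, LinearMap.comp_assoc, rT]

/-- The left-hand side `(1 + ξ + ξ²)(α ⊗ γ)γ` of the Hom-co-Jacobi identity. -/
def homCoJacobiator (γ : V →ₗ[K] V ⊗[K] V) (α : V →ₗ[K] V) : V →ₗ[K] V ⊗[K] (V ⊗[K] V) :=
  (LinearMap.id + cyc + cyc ∘ₗ cyc) ∘ₗ (lT α γ ∘ₗ γ)

/-- The left-hand side of the first compatibility axiom of a post-Hom-Lie coalgebra, dual to the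
failure of the product to act on the bracket by derivations. -/
def coderivationDefect (γ Δ : V →ₗ[K] V ⊗[K] V) (α : V →ₗ[K] V) :
    V →ₗ[K] V ⊗[K] (V ⊗[K] V) :=
  lT α γ ∘ₗ Δ - rT Δ α ∘ₗ γ - sw12 ∘ₗ (lT α Δ ∘ₗ γ)

/-- The left-hand side of the second compatibility axiom of a post-Hom-Lie coalgebra: the
antisymmetrized Hom-coassociator of `Δ`, corrected by the cobracket `γ`. -/
def postLieDefect (γ Δ : V →ₗ[K] V ⊗[K] V) (α : V →ₗ[K] V) : V →ₗ[K] V ⊗[K] (V ⊗[K] V) :=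
  rT Δ α ∘ₗ Δ - lT α Δ ∘ₗ Δ - sw12 ∘ₗ (rT Δ α ∘ₗ Δ) + sw12 ∘ₗ (lT α Δ ∘ₗ Δ) + rT γ α ∘ₗ Δ

variable {γ Δ : V →ₗ[K] V ⊗[K] V} {α β : V →ₗ[K] V}

theorem lT_twist {δ : V →ₗ[K] V ⊗[K] V} (hβδ : δ ∘ₗ β = TensorProduct.map β β ∘ₗ δ) :
    lT (β ∘ₗ α) (δ ∘ₗ β) = TensorProduct.map β (TensorProduct.map β β) ∘ₗ lT α δ := by
  rw [hβδ, lT_map_comp]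

theorem rT_twist {δ : V →ₗ[K] V ⊗[K] V} (hβδ : δ ∘ₗ β = TensorProduct.map β β ∘ₗ δ) :
    rT (δ ∘ₗ β) (β ∘ₗ α) = TensorProduct.map β (TensorProduct.map β β) ∘ₗ rT δ α := by
  rw [hβδ, rT_map_comp]

theorem homCoJacobiator_twist (hβγ : γ ∘ₗ β = TensorProduct.map β β ∘ₗ γ) :
    homCoJacobiator (γ ∘ₗ β) (β ∘ₗ α) =
      TensorProduct.map β (TensorProduct.map β β) ∘ₗ homCoJacobiator γ α ∘ₗ β := by
  have cyclicSum_comp_map :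
      (LinearMap.id + cyc + cyc ∘ₗ cyc) ∘ₗ TensorProduct.map β (TensorProduct.map β β) =
        TensorProduct.map β (TensorProduct.map β β) ∘ₗ (LinearMap.id + cyc + cyc ∘ₗ cyc) := by
    simp only [LinearMap.add_comp, LinearMap.comp_add, LinearMap.id_comp, LinearMap.comp_id,
      LinearMap.comp_assoc, cyc_comp_map]
    simp only [← LinearMap.comp_assoc, cyc_comp_map]
  simp only [homCoJacobiator, lT_twist hβγ, ← LinearMap.comp_assoc, cyclicSum_comp_map]

theorem coderivationDefect_twist (hβγ : γ ∘ₗ β = TensorProduct.map β β ∘ₗ γ)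
    (hβΔ : Δ ∘ₗ β = TensorProduct.map β β ∘ₗ Δ) :
    coderivationDefect (γ ∘ₗ β) (Δ ∘ₗ β) (β ∘ₗ α) =
      TensorProduct.map β (TensorProduct.map β β) ∘ₗ coderivationDefect γ Δ α ∘ₗ β := by
  simp only [coderivationDefect, lT_twist hβγ, lT_twist hβΔ, rT_twist hβΔ,
    sw12_comp_map, LinearMap.comp_sub, LinearMap.sub_comp, ← LinearMap.comp_assoc]

theorem postLieDefect_twist (hβγ : γ ∘ₗ β = TensorProduct.map β β ∘ₗ γ)
    (hβΔ : Δ ∘ₗ β = TensorProduct.map β β ∘ₗ Δ) :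
    postLieDefect (γ ∘ₗ β) (Δ ∘ₗ β) (β ∘ₗ α) =
      TensorProduct.map β (TensorProduct.map β β) ∘ₗ postLieDefect γ Δ α ∘ₗ β := by
  simp only [postLieDefect, lT_twist hβΔ, rT_twist hβγ, rT_twist hβΔ,
    sw12_comp_map, LinearMap.comp_sub, LinearMap.sub_comp, LinearMap.comp_add,
    LinearMap.add_comp, ← LinearMap.comp_assoc]

theorem IsHomLieCoalgebra.twist (h : IsHomLieCoalgebra γ α) (hβα : β ∘ₗ α = α ∘ₗ β)
    (hβγ : γ ∘ₗ β = TensorProduct.map β β ∘ₗ γ) :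
    IsHomLieCoalgebra (γ ∘ₗ β) (β ∘ₗ α) := by
  obtain ⟨skew, comultiplicative, coJacobi⟩ := h
  refine ⟨?_, ?_, ?_⟩
  · rw [← LinearMap.comp_assoc, ← LinearMap.neg_comp, ← skew]
  · calc (γ ∘ₗ β) ∘ₗ (β ∘ₗ α)
        = (γ ∘ₗ β) ∘ₗ (α ∘ₗ β) := by rw [hβα]
      _ = TensorProduct.map β β ∘ₗ (γ ∘ₗ α) ∘ₗ β := by rw [hβγ]; simp only [LinearMap.comp_assoc]
      _ = TensorProduct.map (β ∘ₗ α) (β ∘ₗ α) ∘ₗ (γ ∘ₗ β) := by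
        rw [comultiplicative, TensorProduct.map_comp]; simp only [LinearMap.comp_assoc]
  · change homCoJacobiator γ α = 0 at coJacobi
    change homCoJacobiator (γ ∘ₗ β) (β ∘ₗ α) = 0
    rw [homCoJacobiator_twist hβγ, coJacobi, LinearMap.zero_comp, LinearMap.comp_zero]

theorem postHomLieCoalgebra_twist_general (h : IsPostHomLieCoalgebra γ Δ α)
    (hβα : β ∘ₗ α = α ∘ₗ β) (hβγ : γ ∘ₗ β = TensorProduct.map β β ∘ₗ γ)
    (hβΔ : Δ ∘ₗ β = TensorProduct.map β β ∘ₗ Δ) :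
    IsPostHomLieCoalgebra (γ ∘ₗ β) (Δ ∘ₗ β) (β ∘ₗ α) := by
  obtain ⟨homLie, coderivation, postLie⟩ := h
  refine ⟨homLie.twist hβα hβγ, ?_, ?_⟩
  · change coderivationDefect γ Δ α = 0 at coderivation
    change coderivationDefect (γ ∘ₗ β) (Δ ∘ₗ β) (β ∘ₗ α) = 0
    rw [coderivationDefect_twist hβγ hβΔ, coderivation, LinearMap.zero_comp, LinearMap.comp_zero]
  · change postLieDefect γ Δ α = 0 at postLie
    change postLieDefect (γ ∘ₗ β) (Δ ∘ₗ β) (β ∘ₗ α) = 0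
    rw [postLieDefect_twist hβγ hβΔ, postLie, LinearMap.zero_comp, LinearMap.comp_zero]

end Twist

/-- Twisting a post-Hom-Lie coalgebra by one of its endomorphisms. -/
theorem postHomLieCoalgebra_twist
    (γ Δ : C →ₗ[F] C ⊗[F] C) (α β : C →ₗ[F] C)
    (h : IsPostHomLieCoalgebra γ Δ α)
    (hβα : β ∘ₗ α = α ∘ₗ β)
    (hβγ : γ ∘ₗ β = TensorProduct.map β β ∘ₗ γ)
    (hβΔ : Δ ∘ₗ β = TensorProduct.map β β ∘ₗ Δ) :
    IsPostHomLieCoalgebra (γ ∘ₗ β) (Δ ∘ₗ β) (β ∘ₗ α) :=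
  postHomLieCoalgebra_twist_general h hβα hβγ hβΔ
end
end

section
/- Let (C, γ, α, R) be a Rota-Baxter Hom-Lie coalgebra of weight λ over a field of characteristic 0. Define γ̃ = λγ and Δ̃ = (R⊗I)∘γ, where I is the identity. Then (C, γ̃, Δ̃, α) is a post-Hom-Lie coalgebra (with Hom-Lie cobracket γ̃ and comultiplication Δ̃). -/
open TensorProduct

noncomputable section

variable {F : Type*} [Field F] [CharZero F]
variable {C : Type*} [AddCommGroup C] [Module F C]

/-!
Modulo skew-cocommutativity, the Hom-co-Jacobi identity reads
`(γ ⊗ α) γ = (α ⊗ γ) γ - (τ ⊗ I) (α ⊗ γ) γ`. Write `Δ = (R ⊗ I) γ`. Applying `R ⊗ I ⊗ I` to this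
identity gives, up to the factor `λ`, the first post-Hom-Lie identity. Applying `R ⊗ R ⊗ I` gives
the second: since `(I ⊗ R) γ = -τ Δ`, the Rota-Baxter relation turns the left-hand side into
`((Δ - τ Δ + λ γ) ⊗ α) Δ`.
-/

section ArbitraryField

omit [CharZero F]

section Naturality

variable {D : Type*} [AddCommGroup D] [Module F D]

theorem map_comp_tw (a b : C →ₗ[F] D) : map a b ∘ₗ tw = tw ∘ₗ map b a :=
  map_comp_comm_eq a b

theorem sw12_comp_map_s12 (a b c : C →ₗ[F] D) :
    sw12 ∘ₗ map a (map b c) = map b (map a c) ∘ₗ sw12 := by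
  ext x y z
  rfl

end Naturality

theorem map_comp_rT (a b c g : C →ₗ[F] C) (f : C →ₗ[F] C ⊗[F] C) :
    map a (map b c) ∘ₗ rT f g = rT (map a b ∘ₗ f) (c ∘ₗ g) := by
  rw [rT, rT, map_comp, ← LinearMap.comp_assoc, ← LinearMap.comp_assoc, map_map_comp_assoc_eq]

theorem rT_comp_map_s12 (f : C →ₗ[F] C ⊗[F] C) (g a b : C →ₗ[F] C) :
    rT f g ∘ₗ map a b = rT (f ∘ₗ a) (g ∘ₗ b) := by
  rw [rT, rT, map_comp, LinearMap.comp_assoc]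

theorem map_comp_lT (a g : C →ₗ[F] C) (b : C ⊗[F] C →ₗ[F] C ⊗[F] C) (f : C →ₗ[F] C ⊗[F] C) :
    map a b ∘ₗ lT g f = lT (a ∘ₗ g) (b ∘ₗ f) :=
  (map_comp a b g f).symm

theorem lT_comp_map_s12 (g : C →ₗ[F] C) (f : C →ₗ[F] C ⊗[F] C) (a b : C →ₗ[F] C) :
    lT g f ∘ₗ map a b = lT (g ∘ₗ a) (f ∘ₗ b) :=
  (map_comp g f a b).symm

theorem map_comp_lT_of_commute {g a : C →ₗ[F] C} (hag : a ∘ₗ g = g ∘ₗ a)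
    (b : C ⊗[F] C →ₗ[F] C ⊗[F] C) (f : C →ₗ[F] C ⊗[F] C) :
    map a b ∘ₗ lT g f = lT g (b ∘ₗ f) ∘ₗ map a LinearMap.id := by
  rw [map_comp_lT, lT_comp_map_s12, hag, LinearMap.comp_id]

theorem rT_add (f₁ f₂ : C →ₗ[F] C ⊗[F] C) (g : C →ₗ[F] C) :
    rT (f₁ + f₂) g = rT f₁ g + rT f₂ g := by
  simp only [rT, map_add_left, LinearMap.comp_add]

theorem rT_neg (f : C →ₗ[F] C ⊗[F] C) (g : C →ₗ[F] C) : rT (-f) g = -rT f g := by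
  ext x y
  simp [rT, neg_tmul]

theorem lT_smul (c : F) (g : C →ₗ[F] C) (f : C →ₗ[F] C ⊗[F] C) :
    lT g (c • f) = c • lT g f :=
  map_smul_right c g f

theorem lT_neg (g : C →ₗ[F] C) (f : C →ₗ[F] C ⊗[F] C) : lT g (-f) = -lT g f := by
  ext x y
  simp [lT, tmul_neg]

theorem rT_tw_comp (f : C →ₗ[F] C ⊗[F] C) (g : C →ₗ[F] C) :
    rT (tw ∘ₗ f) g = sw12 ∘ₗ rT f g := by
  ext x y
  simp [rT, sw12]

theorem cyc_eq_assoc_comp_comm :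
    (cyc : C ⊗[F] (C ⊗[F] C) →ₗ[F] C ⊗[F] (C ⊗[F] C)) =
      (TensorProduct.assoc F C C C).toLinearMap ∘ₗ
        (TensorProduct.comm F C (C ⊗[F] C)).toLinearMap := by
  ext x y z
  rfl

theorem cyc_comp_cyc :
    (cyc ∘ₗ cyc : C ⊗[F] (C ⊗[F] C) →ₗ[F] C ⊗[F] (C ⊗[F] C)) =
      sw12 ∘ₗ map LinearMap.id tw := by
  ext x y z
  rfl

theorem cyc_comp_lT (g : C →ₗ[F] C) (f : C →ₗ[F] C ⊗[F] C) :
    cyc ∘ₗ lT g f = rT f g ∘ₗ tw := by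
  rw [cyc_eq_assoc_comp_comm, lT, LinearMap.comp_assoc, ← map_comp_comm_eq, rT, tw,
    LinearMap.comp_assoc]

theorem cyc_comp_cyc_comp_lT (g : C →ₗ[F] C) (f : C →ₗ[F] C ⊗[F] C) :
    (cyc ∘ₗ cyc) ∘ₗ lT g f = sw12 ∘ₗ lT g (tw ∘ₗ f) := by
  rw [cyc_comp_cyc, LinearMap.comp_assoc, map_comp_lT, LinearMap.id_comp]

/-- The comultiplication `Δ̃ = (R ⊗ I) ∘ γ` of the post-Hom-Lie coalgebra attached to a
Rota-Baxter operator `R`. It is defined for every linear map `R`. -/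
def rotaBaxterComul (R : C →ₗ[F] C) (γ : C →ₗ[F] C ⊗[F] C) : C →ₗ[F] C ⊗[F] C :=
  map R LinearMap.id ∘ₗ γ

namespace IsHomLieCoalgebra

variable {γ : C →ₗ[F] C ⊗[F] C} {α R : C →ₗ[F] C} {lam : F}

theorem tw_comp (h : IsHomLieCoalgebra γ α) : tw ∘ₗ γ = -γ :=
  (neg_eq_iff_eq_neg.mpr h.1).symm

theorem smul (h : IsHomLieCoalgebra γ α) (c : F) : IsHomLieCoalgebra (c • γ) α := by
  refine ⟨?_, ?_, ?_⟩
  · rw [LinearMap.comp_smul, h.tw_comp, smul_neg, neg_neg]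
  · rw [LinearMap.smul_comp, LinearMap.comp_smul, h.2.1]
  · simp only [lT_smul, LinearMap.smul_comp, LinearMap.comp_smul, h.2.2, smul_zero]

theorem rT_comp_eq_sub (h : IsHomLieCoalgebra γ α) :
    rT γ α ∘ₗ γ = lT α γ ∘ₗ γ - sw12 ∘ₗ lT α γ ∘ₗ γ := by
  have cyc_term : cyc ∘ₗ lT α γ ∘ₗ γ = -(rT γ α ∘ₗ γ) := by
    rw [← LinearMap.comp_assoc, cyc_comp_lT, LinearMap.comp_assoc, h.tw_comp, LinearMap.comp_neg]
  have cyc_cyc_term : (cyc ∘ₗ cyc) ∘ₗ lT α γ ∘ₗ γ = -(sw12 ∘ₗ lT α γ ∘ₗ γ) := by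
    rw [← LinearMap.comp_assoc, cyc_comp_cyc_comp_lT, h.tw_comp, lT_neg, LinearMap.comp_neg,
      LinearMap.neg_comp, LinearMap.comp_assoc]
  have coJacobi := h.2.2
  rw [LinearMap.add_comp, LinearMap.add_comp, LinearMap.id_comp, cyc_term, cyc_cyc_term]
    at coJacobi
  rw [← sub_eq_zero, ← neg_eq_zero, ← coJacobi]
  abel

theorem map_id_comp_eq_neg_tw_comp (h : IsHomLieCoalgebra γ α) (R : C →ₗ[F] C) :
    map LinearMap.id R ∘ₗ γ = -(tw ∘ₗ rotaBaxterComul R γ) := by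
  rw [rotaBaxterComul, ← LinearMap.comp_assoc, ← map_comp_tw, LinearMap.comp_assoc, h.tw_comp,
    LinearMap.comp_neg, neg_neg]

theorem lT_comp_rotaBaxterComul (h : IsHomLieCoalgebra γ α) (hRα : R ∘ₗ α = α ∘ₗ R) :
    lT α γ ∘ₗ rotaBaxterComul R γ =
      rT (rotaBaxterComul R γ) α ∘ₗ γ + sw12 ∘ₗ lT α (rotaBaxterComul R γ) ∘ₗ γ := by
  have lT_term : map R (map LinearMap.id LinearMap.id) ∘ₗ lT α γ ∘ₗ γ =
      lT α γ ∘ₗ rotaBaxterComul R γ := by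
    rw [← LinearMap.comp_assoc, map_comp_lT_of_commute hRα, map_id, LinearMap.id_comp,
      LinearMap.comp_assoc, rotaBaxterComul]
  have sw12_term : map R (map LinearMap.id LinearMap.id) ∘ₗ sw12 ∘ₗ lT α γ ∘ₗ γ =
      sw12 ∘ₗ lT α (rotaBaxterComul R γ) ∘ₗ γ := by
    rw [← LinearMap.comp_assoc, ← sw12_comp_map_s12, LinearMap.comp_assoc,
      ← LinearMap.comp_assoc γ, map_comp_lT, LinearMap.id_comp, rotaBaxterComul]
  calc lT α γ ∘ₗ rotaBaxterComul R γ
      = map R (map LinearMap.id LinearMap.id) ∘ₗ (rT γ α ∘ₗ γ + sw12 ∘ₗ lT α γ ∘ₗ γ) := by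
        rw [h.rT_comp_eq_sub, sub_add_cancel, lT_term]
    _ = rT (rotaBaxterComul R γ) α ∘ₗ γ + sw12 ∘ₗ lT α (rotaBaxterComul R γ) ∘ₗ γ := by
        rw [LinearMap.comp_add, sw12_term, ← LinearMap.comp_assoc, map_comp_rT,
          LinearMap.id_comp, rotaBaxterComul]

theorem map_comp_rT_comp_of_rotaBaxter (h : IsHomLieCoalgebra γ α)
    (hRB : map R R ∘ₗ γ =
      (map R LinearMap.id ∘ₗ γ + map LinearMap.id R ∘ₗ γ + lam • γ) ∘ₗ R) :
    map R (map R LinearMap.id) ∘ₗ rT γ α ∘ₗ γ =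
      rT (rotaBaxterComul R γ) α ∘ₗ rotaBaxterComul R γ -
        sw12 ∘ₗ rT (rotaBaxterComul R γ) α ∘ₗ rotaBaxterComul R γ +
        rT (lam • γ) α ∘ₗ rotaBaxterComul R γ := by
  have rT_comp_R (f : C →ₗ[F] C ⊗[F] C) :
      rT (f ∘ₗ R) α ∘ₗ γ = rT f α ∘ₗ rotaBaxterComul R γ := by
    rw [rotaBaxterComul, ← LinearMap.comp_assoc, rT_comp_map_s12, LinearMap.comp_id]
  rw [← LinearMap.comp_assoc, map_comp_rT, LinearMap.id_comp, hRB, h.map_id_comp_eq_neg_tw_comp,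
    ← rotaBaxterComul, rT_comp_R, rT_add, rT_add, rT_neg, rT_tw_comp, ← sub_eq_add_neg,
    LinearMap.add_comp, LinearMap.sub_comp, LinearMap.comp_assoc]

theorem rT_comp_rotaBaxterComul (h : IsHomLieCoalgebra γ α) (hRα : R ∘ₗ α = α ∘ₗ R)
    (hRB : map R R ∘ₗ γ =
      (map R LinearMap.id ∘ₗ γ + map LinearMap.id R ∘ₗ γ + lam • γ) ∘ₗ R) :
    rT (rotaBaxterComul R γ) α ∘ₗ rotaBaxterComul R γ -
        sw12 ∘ₗ rT (rotaBaxterComul R γ) α ∘ₗ rotaBaxterComul R γ +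
        rT (lam • γ) α ∘ₗ rotaBaxterComul R γ =
      lT α (rotaBaxterComul R γ) ∘ₗ rotaBaxterComul R γ -
        sw12 ∘ₗ lT α (rotaBaxterComul R γ) ∘ₗ rotaBaxterComul R γ := by
  have lT_term : map R (map R LinearMap.id) ∘ₗ lT α γ ∘ₗ γ =
      lT α (rotaBaxterComul R γ) ∘ₗ rotaBaxterComul R γ := by
    rw [← LinearMap.comp_assoc, map_comp_lT_of_commute hRα, LinearMap.comp_assoc,
      rotaBaxterComul]
  rw [← h.map_comp_rT_comp_of_rotaBaxter hRB, h.rT_comp_eq_sub, LinearMap.comp_sub,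
    ← LinearMap.comp_assoc _ sw12, ← sw12_comp_map_s12, LinearMap.comp_assoc, lT_term]

end IsHomLieCoalgebra

theorem rotaBaxterHomLie_postHomLieCoalgebra_general
    (γ : C →ₗ[F] C ⊗[F] C) (α R : C →ₗ[F] C) (lam : F)
    (h : IsHomLieCoalgebra γ α)
    (hRα : R ∘ₗ α = α ∘ₗ R)
    (hRB : map R R ∘ₗ γ =
      (map R LinearMap.id ∘ₗ γ + map LinearMap.id R ∘ₗ γ + lam • γ) ∘ₗ R) :
    IsPostHomLieCoalgebra (lam • γ) (map R LinearMap.id ∘ₗ γ) α := by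
  rw [← rotaBaxterComul]
  refine ⟨h.smul lam, ?_, ?_⟩
  · rw [lT_smul, LinearMap.smul_comp, h.lT_comp_rotaBaxterComul hRα]
    simp only [LinearMap.comp_smul, smul_add]
    abel
  · rw [← sub_eq_zero.mpr (h.rT_comp_rotaBaxterComul hRα hRB)]
    abel

end ArbitraryField

/-- A Rota-Baxter Hom-Lie coalgebra of weight `lam` yields a post-Hom-Lie
coalgebra with `γ̃ = lam • γ` and `Δ̃ = (R ⊗ I) ∘ γ`. -/
theorem rotaBaxterHomLie_postHomLieCoalgebra
    (γ : C →ₗ[F] C ⊗[F] C) (α R : C →ₗ[F] C) (lam : F)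
    (h : IsHomLieCoalgebra γ α)
    (hRα : R ∘ₗ α = α ∘ₗ R)
    (hRB : TensorProduct.map R R ∘ₗ γ =
      (TensorProduct.map R (LinearMap.id : C →ₗ[F] C) ∘ₗ γ +
       TensorProduct.map (LinearMap.id : C →ₗ[F] C) R ∘ₗ γ + lam • γ) ∘ₗ R) :
    IsPostHomLieCoalgebra (lam • γ)
      (TensorProduct.map R (LinearMap.id : C →ₗ[F] C) ∘ₗ γ) α :=
  rotaBaxterHomLie_postHomLieCoalgebra_general γ α R lam h hRα hRB
end
end

section
/- Let (C, γ, Δ, α) be a post-Hom-Lie coalgebra over a field of characteristic 0 and let (C', Δ', α') be a cocommutative comultiplicative Hom-coassociative coalgebra (so τ'∘Δ' = Δ' and Δ'∘α' = (α'⊗α')∘Δ', where τ' is the flip of C'⊗C'). On C'⊗C define the linear maps Δ̃ = (I⊗σ⊗I)∘(Δ'⊗Δ), γ̃ = (I⊗σ⊗I)∘(Δ'⊗γ), and α̃ = α'⊗α, where σ swaps the middle two tensor factors C'⊗C → C⊗C'. Then (C'⊗C, γ̃, Δ̃, α̃) is a post-Hom-Lie coalgebra. -/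
open TensorProduct

noncomputable section

variable {F : Type*} [Field F] [CharZero F]
variable {C : Type*} [AddCommGroup C] [Module F C]

/-!
Cocommutativity and Hom-coassociativity make the iterated comultiplication
`T = (α' ⊗ Δ') ∘ Δ' = (Δ' ⊗ α') ∘ Δ'` invariant under every permutation of the three tensor factors.
Every threefold composite of `γ̃`, `Δ̃` and `α̃` is the interleaving of `T` with the composite `X`
of `γ`, `Δ` and `α` of the same shape, and permuting its factors permutes only those of `X`. As the
interleaving is linear in `X`, it carries each threefold axiom of `C` to that of `C' ⊗ C`.
-/

section Interleaving

variable {R : Type*} [CommSemiring R]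
variable {M M₁ M₂ M₃ N N₁ N₂ N₃ : Type*}
  [AddCommMonoid M] [AddCommMonoid M₁] [AddCommMonoid M₂] [AddCommMonoid M₃]
  [AddCommMonoid N] [AddCommMonoid N₁] [AddCommMonoid N₂] [AddCommMonoid N₃]
  [Module R M] [Module R M₁] [Module R M₂] [Module R M₃]
  [Module R N] [Module R N₁] [Module R N₂] [Module R N₃]

/-- The tensor product `(I ⊗ σ ⊗ I) ∘ (d ⊗ f)` of two comultiplications `d` and `f`, bundled as a
linear map in `f`. -/
def tensorComul (d : M →ₗ[R] M₁ ⊗[R] M₂) :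
    (N →ₗ[R] N₁ ⊗[R] N₂) →ₗ[R] M ⊗[R] N →ₗ[R] (M₁ ⊗[R] N₁) ⊗[R] (M₂ ⊗[R] N₂) :=
  LinearMap.compRight R (tensorTensorTensorComm R M₁ M₂ N₁ N₂).toLinearMap ∘ₗ
    mapBilinear (.id R) M N (M₁ ⊗[R] M₂) (N₁ ⊗[R] N₂) d

lemma tensorComul_apply (d : M →ₗ[R] M₁ ⊗[R] M₂) (f : N →ₗ[R] N₁ ⊗[R] N₂) :
    tensorComul d f = (tensorTensorTensorComm R M₁ M₂ N₁ N₂).toLinearMap ∘ₗ map d f :=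
  rfl

variable (R M₁ M₂ M₃ N₁ N₂ N₃) in
/-- The interleaving `(a ⊗ b ⊗ c) ⊗ (x ⊗ y ⊗ z) ↦ (a ⊗ x) ⊗ (b ⊗ y) ⊗ (c ⊗ z)`, the analogue of
`TensorProduct.tensorTensorTensorComm` for threefold tensor products. -/
def tensorTripleComm :
    (M₁ ⊗[R] (M₂ ⊗[R] M₃)) ⊗[R] (N₁ ⊗[R] (N₂ ⊗[R] N₃)) ≃ₗ[R]
      (M₁ ⊗[R] N₁) ⊗[R] ((M₂ ⊗[R] N₂) ⊗[R] (M₃ ⊗[R] N₃)) :=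
  tensorTensorTensorComm R M₁ (M₂ ⊗[R] M₃) N₁ (N₂ ⊗[R] N₃) ≪≫ₗ
    congr (.refl R (M₁ ⊗[R] N₁)) (tensorTensorTensorComm R M₂ M₃ N₂ N₃)

@[simp]
lemma tensorTripleComm_tmul (a : M₁) (b : M₂) (c : M₃) (x : N₁) (y : N₂) (z : N₃) :
    tensorTripleComm R M₁ M₂ M₃ N₁ N₂ N₃ ((a ⊗ₜ (b ⊗ₜ c)) ⊗ₜ (x ⊗ₜ (y ⊗ₜ z))) =
      (a ⊗ₜ x) ⊗ₜ ((b ⊗ₜ y) ⊗ₜ (c ⊗ₜ z)) :=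
  rfl

/-- The analogue of `tensorComul` for maps into threefold tensor products, bundled as a linear map
in the second argument. -/
def tensorTripleComul (T : M →ₗ[R] M₁ ⊗[R] (M₂ ⊗[R] M₃)) :
    (N →ₗ[R] N₁ ⊗[R] (N₂ ⊗[R] N₃)) →ₗ[R]
      M ⊗[R] N →ₗ[R] (M₁ ⊗[R] N₁) ⊗[R] ((M₂ ⊗[R] N₂) ⊗[R] (M₃ ⊗[R] N₃)) :=
  LinearMap.compRight R (tensorTripleComm R M₁ M₂ M₃ N₁ N₂ N₃).toLinearMap ∘ₗ
    mapBilinear (.id R) M N (M₁ ⊗[R] (M₂ ⊗[R] M₃)) (N₁ ⊗[R] (N₂ ⊗[R] N₃)) T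

lemma tensorTripleComul_apply (T : M →ₗ[R] M₁ ⊗[R] (M₂ ⊗[R] M₃))
    (X : N →ₗ[R] N₁ ⊗[R] (N₂ ⊗[R] N₃)) :
    tensorTripleComul T X =
      (tensorTripleComm R M₁ M₂ M₃ N₁ N₂ N₃).toLinearMap ∘ₗ map T X :=
  rfl

lemma tensorComul_comp_map {P Q : Type*} [AddCommMonoid P] [AddCommMonoid Q] [Module R P]
    [Module R Q] (d : M →ₗ[R] M₁ ⊗[R] M₂) (f : N →ₗ[R] N₁ ⊗[R] N₂)
    (a : P →ₗ[R] M) (b : Q →ₗ[R] N) :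
    tensorComul d f ∘ₗ map a b = tensorComul (d ∘ₗ a) (f ∘ₗ b) := by
  simp only [tensorComul_apply, map_comp, LinearMap.comp_assoc]

lemma map_map_comp_tensorComul {P₁ P₂ Q₁ Q₂ : Type*} [AddCommMonoid P₁] [AddCommMonoid P₂]
    [AddCommMonoid Q₁] [AddCommMonoid Q₂] [Module R P₁] [Module R P₂] [Module R Q₁] [Module R Q₂]
    (a₁ : M₁ →ₗ[R] P₁) (b₁ : N₁ →ₗ[R] Q₁) (a₂ : M₂ →ₗ[R] P₂) (b₂ : N₂ →ₗ[R] Q₂)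
    (d : M →ₗ[R] M₁ ⊗[R] M₂) (f : N →ₗ[R] N₁ ⊗[R] N₂) :
    map (map a₁ b₁) (map a₂ b₂) ∘ₗ tensorComul d f =
      tensorComul (map a₁ a₂ ∘ₗ d) (map b₁ b₂ ∘ₗ f) := by
  simp only [tensorComul_apply, map_comp, ← LinearMap.comp_assoc, tensorTensorTensorComm_comp_map]

lemma map_tensorTensorTensorComm_comp_tensorComul
    (T : M →ₗ[R] M₁ ⊗[R] (M₂ ⊗[R] M₃)) (X : N →ₗ[R] N₁ ⊗[R] (N₂ ⊗[R] N₃)) :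
    map .id (tensorTensorTensorComm R M₂ M₃ N₂ N₃).toLinearMap ∘ₗ tensorComul T X =
      tensorTripleComul T X :=
  rfl

lemma assoc_comp_map_tensorTensorTensorComm_comp_tensorComul
    (T : M →ₗ[R] (M₁ ⊗[R] M₂) ⊗[R] M₃) (X : N →ₗ[R] (N₁ ⊗[R] N₂) ⊗[R] N₃) :
    (TensorProduct.assoc R (M₁ ⊗[R] N₁) (M₂ ⊗[R] N₂) (M₃ ⊗[R] N₃)).toLinearMap ∘ₗ
        map (tensorTensorTensorComm R M₁ M₂ N₁ N₂).toLinearMap .id ∘ₗ tensorComul T X =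
      tensorTripleComul ((TensorProduct.assoc R M₁ M₂ M₃).toLinearMap ∘ₗ T)
        ((TensorProduct.assoc R N₁ N₂ N₃).toLinearMap ∘ₗ X) := by
  simp only [tensorComul_apply, tensorTripleComul_apply, map_comp, ← LinearMap.comp_assoc]
  congr 1
  ext a b c x y z
  simp

end Interleaving

section FactorPermutations

variable {K : Type*} [Field K]
variable {D E M N : Type*} [AddCommGroup D] [AddCommGroup E] [AddCommGroup M] [AddCommGroup N]
  [Module K D] [Module K E] [Module K M] [Module K N]

@[simp]
lemma tw_tmul (x y : D) : tw (F := K) (x ⊗ₜ y) = y ⊗ₜ x :=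
  rfl

@[simp]
lemma sw12_tmul (x y z : D) : sw12 (F := K) (x ⊗ₜ (y ⊗ₜ z)) = y ⊗ₜ (x ⊗ₜ z) :=
  rfl

@[simp]
lemma cyc_tmul (x y z : D) : cyc (F := K) (x ⊗ₜ (y ⊗ₜ z)) = y ⊗ₜ (z ⊗ₜ x) :=
  rfl

lemma tw_comp_tensorComul (d : M →ₗ[K] D ⊗[K] D) (f : N →ₗ[K] E ⊗[K] E) :
    tw ∘ₗ tensorComul d f = tensorComul (tw ∘ₗ d) (tw ∘ₗ f) := by
  simp only [tensorComul_apply, map_comp, ← LinearMap.comp_assoc]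
  congr 1
  ext a b x y
  simp

lemma sw12_comp_tensorTripleComul (T : M →ₗ[K] D ⊗[K] (D ⊗[K] D))
    (X : N →ₗ[K] E ⊗[K] (E ⊗[K] E)) :
    sw12 ∘ₗ tensorTripleComul T X = tensorTripleComul (sw12 ∘ₗ T) (sw12 ∘ₗ X) := by
  simp only [tensorTripleComul_apply, map_comp, ← LinearMap.comp_assoc]
  congr 1
  ext a b c x y z
  simp

lemma cyc_comp_tensorTripleComul (T : M →ₗ[K] D ⊗[K] (D ⊗[K] D))
    (X : N →ₗ[K] E ⊗[K] (E ⊗[K] E)) :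
    cyc ∘ₗ tensorTripleComul T X = tensorTripleComul (cyc ∘ₗ T) (cyc ∘ₗ X) := by
  simp only [tensorTripleComul_apply, map_comp, ← LinearMap.comp_assoc]
  congr 1
  ext a b c x y z
  simp

lemma lT_comp_tensorComul (β : D →ₗ[K] D) (d : D →ₗ[K] D ⊗[K] D) (d' : M →ₗ[K] D ⊗[K] D)
    (α : E →ₗ[K] E) (f : E →ₗ[K] E ⊗[K] E) (g : N →ₗ[K] E ⊗[K] E) :
    lT (map β α) (tensorComul d f) ∘ₗ tensorComul d' g =
      tensorTripleComul (lT β d ∘ₗ d') (lT α f ∘ₗ g) := by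
  rw [lT, tensorComul_apply d f, ← LinearMap.id_comp (map β α), map_comp, LinearMap.comp_assoc,
    map_map_comp_tensorComul, map_tensorTensorTensorComm_comp_tensorComul, lT, lT]

lemma rT_comp_tensorComul (d : D →ₗ[K] D ⊗[K] D) (β : D →ₗ[K] D) (d' : M →ₗ[K] D ⊗[K] D)
    (f : E →ₗ[K] E ⊗[K] E) (α : E →ₗ[K] E) (g : N →ₗ[K] E ⊗[K] E) :
    rT (tensorComul d f) (map β α) ∘ₗ tensorComul d' g =
      tensorTripleComul (rT d β ∘ₗ d') (rT f α ∘ₗ g) := by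
  rw [rT, tensorComul_apply d f, ← LinearMap.id_comp (map β α), map_comp, LinearMap.comp_assoc,
    LinearMap.comp_assoc, map_map_comp_tensorComul,
    assoc_comp_map_tensorTensorTensorComm_comp_tensorComul, rT, rT, LinearMap.comp_assoc,
    LinearMap.comp_assoc]

lemma sw12_comp_rT (d : D →ₗ[K] D ⊗[K] D) (β : D →ₗ[K] D) :
    sw12 ∘ₗ rT d β = rT (tw ∘ₗ d) β := by
  ext x y
  simp [sw12, rT]

lemma map_id_tw_comp_lT (β : D →ₗ[K] D) (d : D →ₗ[K] D ⊗[K] D) :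
    map .id tw ∘ₗ lT β d = lT β (tw ∘ₗ d) := by
  rw [lT, lT, ← map_comp, LinearMap.id_comp]

end FactorPermutations

section TensorProductStructure

variable {K : Type*} [Field K]
variable {D E : Type*} [AddCommGroup D] [AddCommGroup E] [Module K D] [Module K E]
variable {d : D →ₗ[K] D ⊗[K] D} {β : D →ₗ[K] D} {γ Δ : E →ₗ[K] E ⊗[K] E} {α : E →ₗ[K] E}

lemma sw12_comp_lT_comp_self (hcoassoc : lT β d ∘ₗ d = rT d β ∘ₗ d) (hcocomm : tw ∘ₗ d = d) :
    sw12 ∘ₗ (lT β d ∘ₗ d) = lT β d ∘ₗ d := by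
  rw [hcoassoc, ← LinearMap.comp_assoc, sw12_comp_rT, hcocomm]

lemma cyc_comp_lT_comp_self (hcoassoc : lT β d ∘ₗ d = rT d β ∘ₗ d) (hcocomm : tw ∘ₗ d = d) :
    cyc ∘ₗ (lT β d ∘ₗ d) = lT β d ∘ₗ d := by
  rw [cyc, LinearMap.comp_assoc, sw12_comp_lT_comp_self hcoassoc hcocomm, ← LinearMap.comp_assoc,
    map_id_tw_comp_lT, hcocomm]

lemma IsHomLieCoalgebra.tensor (h : IsHomLieCoalgebra γ α)
    (hcoassoc : lT β d ∘ₗ d = rT d β ∘ₗ d) (hcocomm : tw ∘ₗ d = d)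
    (hcomult : d ∘ₗ β = map β β ∘ₗ d) :
    IsHomLieCoalgebra (tensorComul d γ) (map β α) := by
  obtain ⟨hskew, hγα, hjacobi⟩ := h
  have hcyc (X : E →ₗ[K] E ⊗[K] (E ⊗[K] E)) :
      cyc ∘ₗ tensorTripleComul (lT β d ∘ₗ d) X = tensorTripleComul (lT β d ∘ₗ d) (cyc ∘ₗ X) := by
    rw [cyc_comp_tensorTripleComul, cyc_comp_lT_comp_self hcoassoc hcocomm]
  refine ⟨?_, ?_, ?_⟩
  · rw [tw_comp_tensorComul, hcocomm, ← map_neg (tensorComul d), ← hskew]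
  · rw [tensorComul_comp_map, map_map_comp_tensorComul, hcomult, hγα]
  · simpa only [LinearMap.add_comp, LinearMap.id_comp, LinearMap.comp_assoc, lT_comp_tensorComul,
      hcyc, map_add, map_zero] using congrArg (tensorTripleComul (lT β d ∘ₗ d)) hjacobi

theorem tensor_postHomLieCoalgebra_general (h : IsPostHomLieCoalgebra γ Δ α)
    (hcoassoc : lT β d ∘ₗ d = rT d β ∘ₗ d) (hcocomm : tw ∘ₗ d = d)
    (hcomult : d ∘ₗ β = map β β ∘ₗ d) :
    IsPostHomLieCoalgebra (tensorComul d γ) (tensorComul d Δ) (map β α) := by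
  obtain ⟨hlie, hγΔ, hΔ⟩ := h
  have hsw12 (X : E →ₗ[K] E ⊗[K] (E ⊗[K] E)) :
      sw12 ∘ₗ tensorTripleComul (lT β d ∘ₗ d) X =
        tensorTripleComul (lT β d ∘ₗ d) (sw12 ∘ₗ X) := by
    rw [sw12_comp_tensorTripleComul, sw12_comp_lT_comp_self hcoassoc hcocomm]
  refine ⟨hlie.tensor hcoassoc hcocomm hcomult, ?_, ?_⟩
  · simpa only [lT_comp_tensorComul, rT_comp_tensorComul, ← hcoassoc, hsw12, map_sub, map_zero]
      using congrArg (tensorTripleComul (lT β d ∘ₗ d)) hγΔ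
  · simpa only [lT_comp_tensorComul, rT_comp_tensorComul, ← hcoassoc, hsw12, map_sub, map_add,
      map_zero] using congrArg (tensorTripleComul (lT β d ∘ₗ d)) hΔ

end TensorProductStructure

/-- The tensor product of a cocommutative comultiplicative Hom-coassociative
coalgebra `(C', Δ', α')` with a post-Hom-Lie coalgebra `(C, γ, Δ, α)` is a
post-Hom-Lie coalgebra, with structure maps `(I ⊗ σ ⊗ I) ∘ (Δ' ⊗ γ)`,
`(I ⊗ σ ⊗ I) ∘ (Δ' ⊗ Δ)` and `α' ⊗ α`. -/
theorem tensor_postHomLieCoalgebra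
    {C' : Type*} [AddCommGroup C'] [Module F C']
    (γ Δ : C →ₗ[F] C ⊗[F] C) (α : C →ₗ[F] C)
    (Δ' : C' →ₗ[F] C' ⊗[F] C') (α' : C' →ₗ[F] C')
    (h : IsPostHomLieCoalgebra γ Δ α)
    (hcoassoc : lT α' Δ' ∘ₗ Δ' = rT Δ' α' ∘ₗ Δ')
    (hcocomm : tw ∘ₗ Δ' = Δ')
    (hcomult : Δ' ∘ₗ α' = TensorProduct.map α' α' ∘ₗ Δ') :
    IsPostHomLieCoalgebra
      ((TensorProduct.tensorTensorTensorComm F C' C' C C).toLinearMap ∘ₗ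
        TensorProduct.map Δ' γ)
      ((TensorProduct.tensorTensorTensorComm F C' C' C C).toLinearMap ∘ₗ
        TensorProduct.map Δ' Δ)
      (TensorProduct.map α' α) := by
  exact tensor_postHomLieCoalgebra_general h hcoassoc hcocomm hcomult
end
end
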